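/- arXiv:2111.03247 — 5 statements merged into one kernel-verified Lean document; each statement's English description precedes it below -/
import Mathlib

section
/- For every δ ∈ (0,1) there exists c > 0 (depending only on δ) such that the following holds. Let G = (V,E) be a finite simple graph on n vertices with maximum degree at most Δ, where Δ ≥ 3 is an integer, let λ ∈ (0, (1−δ)·λ_Δ], and let μ be the hardcore model on G with uniform fugacity λ. Let κ > 0 and let f : 2^V → ℝ satisfy |f(σ ∪ {v}) − f(σ)| ≤ κ for every σ ⊆ V and v ∉ σ (i.e., f is κ-Lipschitz with respect to the Hamming metric). Then for all t ≥ 0, P_μ( f − E_μ[f] > t ) ≤ exp(−c·t²/(κ²·n)). -/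
/-!
Reveal the vertices one at a time and apply the Azuma–Hoeffding method. Revealing `u`, when `S` is
the set of vertices not yet decided, moves the conditional mean of `f` by at most the gap between
its means given `u` occupied and given `u` vacant, so it suffices to bound this gap by a constant
multiple of `κ`, uniformly in `S` and `u`.

Vacating `u` leaves the hardcore model on `S \ {u}`; occupying `u` deletes the neighbours
`u₁, …, u_k` of `u` as well and changes `f` by at most `κ`. When the neighbours are deleted one
after another, the deletion of `u_i` changes the mean of `f` by `p_i * gap(u_i)`, where `p_i` is the
occupation probability of `u_i` in the graph that remains. Hence `gap(u) ≤ κ + ∑ p_i * gap(u_i)`,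
while `p(u) = x / (1 + x)` with `x = λ_u * ∏ (1 - p_i)`: this is the recursion on Weitz's tree of
self-avoiding walks.

The recursion contracts for the potential `√p`: with at most `d = Δ - 1` children,
`√p(u) * ∑ √p_i ≤ 1 - δ / 18`. Cauchy–Schwarz and AM–GM reduce this to equal `p_i`, and what remains
is Bernoulli's inequality, with equality at the fixed point of the tree recursion for `λ_Δ`. So
`√p(u) * gap(u) = O(κ * √λ_Δ / δ)` whenever a neighbour of `u` has been removed. A vertex all of
whose neighbours remain may have `Δ` children; there one more step of the recursion gives
`gap(u) ≤ κ + O(κ * Δ * λ_Δ / δ)`, and `Δ * λ_Δ` is bounded.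
-/

open Finset

noncomputable section
attribute [local instance] Classical.propDecidable

variable {V : Type*} [Fintype V] [DecidableEq V]

/-- `σ` is an independent set of `G`: no two of its elements are adjacent. -/
def IndepSet (G : SimpleGraph V) (σ : Finset V) : Prop :=
  ∀ u ∈ σ, ∀ w ∈ σ, ¬ G.Adj u w

/-- Unnormalized hardcore weight of `σ`: `∏_{v ∈ σ} λ_v` if `σ` is independent, else `0`. -/
def hcWeight (G : SimpleGraph V) (lam : V → ℝ) (σ : Finset V) : ℝ :=
  if IndepSet G σ then ∏ v ∈ σ, lam v else 0

/-- The hardcore model on `G` with fugacities `lam`, as a distribution on `Finset V`. -/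
def hardcore (G : SimpleGraph V) (lam : V → ℝ) (σ : Finset V) : ℝ :=
  hcWeight G lam σ / ∑ τ : Finset V, hcWeight G lam τ

/-- The tree-uniqueness threshold `λ_Δ = (Δ−1)^{Δ−1}/(Δ−2)^Δ`. -/
def hcCrit (Δ : ℕ) : ℝ := ((Δ : ℝ) - 1) ^ (Δ - 1) / ((Δ : ℝ) - 2) ^ Δ

/-- Mean of `f` under a distribution `μ` on a finite set. -/
def expect {Ω : Type*} [Fintype Ω] (μ : Ω → ℝ) (f : Ω → ℝ) : ℝ :=
  ∑ x, μ x * f x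

/-! ### The hardcore tree recursion -/

/-- The hardcore recursion on rooted trees: the occupation probability of a root of fugacity `lam`
whose `i`-th child is occupied with probability `p i` in the tree below that child. -/
def hcTreeProb {ι : Type*} [Fintype ι] (lam : ℝ) (p : ι → ℝ) : ℝ :=
  (lam * ∏ i, (1 - p i)) / (1 + lam * ∏ i, (1 - p i))

lemma hcCrit_succ (d : ℕ) : hcCrit (d + 1) = (d : ℝ) ^ d / ((d : ℝ) - 1) ^ (d + 1) := by
  simp only [hcCrit, Nat.cast_add, Nat.cast_one, Nat.add_sub_cancel, add_sub_cancel_right]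
  congr 2
  ring

lemma hcCrit_succ_pos {d : ℕ} (hd : 2 ≤ d) : 0 < hcCrit (d + 1) := by
  have hd1 : (0 : ℝ) < (d : ℝ) - 1 := by
    have : (2 : ℝ) ≤ d := mod_cast hd
    linarith
  rw [hcCrit_succ]
  positivity

lemma hcCrit_succ_mul_pred_le {d : ℕ} (hd : 2 ≤ d) : hcCrit (d + 1) * ((d : ℝ) - 1) ≤ 8 := by
  have hd2 : (2 : ℝ) ≤ d := mod_cast hd
  have hd1 : (0 : ℝ) < (d : ℝ) - 1 := by linarith
  calc hcCrit (d + 1) * ((d : ℝ) - 1) = (1 / ((d : ℝ) - 1) + 1) ^ d := by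
        rw [hcCrit_succ, pow_succ, ← div_div, div_mul_cancel₀ _ hd1.ne', ← div_pow]
        congr 1
        field_simp
        ring
    _ ≤ Real.exp (1 / ((d : ℝ) - 1)) ^ d := by
        gcongr
        exact Real.add_one_le_exp _
    _ = Real.exp (d / ((d : ℝ) - 1)) := by rw [← Real.exp_nat_mul, mul_one_div]
    _ ≤ Real.exp 2 := by
        rw [Real.exp_le_exp, div_le_iff₀ hd1]
        linarith
    _ = Real.exp 1 ^ 2 := by rw [← Real.exp_nat_mul, Nat.cast_ofNat, mul_one]
    _ ≤ 2.8 ^ 2 := by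
        gcongr
        linarith [Real.exp_one_lt_d9]
    _ ≤ 8 := by norm_num

/-- Equality holds at `q = (d - 1) / d`, where `1 - q` is the fixed point of the critical tree
recursion. -/
lemma hcCrit_succ_mul_pow_mul_le {d : ℕ} (hd : 2 ≤ d) {q : ℝ} (hq : 0 ≤ q) :
    hcCrit (d + 1) * q ^ d * ((d : ℝ) ^ 2 * (1 - q) - 1) ≤ 1 := by
  rcases hq.eq_or_lt with rfl | hq
  · simp [show d ≠ 0 by omega]
  have hd2 : (2 : ℝ) ≤ d := mod_cast hd
  have hd1 : (0 : ℝ) < (d : ℝ) - 1 := by linarith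
  set z : ℝ := ((d : ℝ) - 1) / (d * q) with hz
  have hz0 : 0 < z := by positivity
  have bernoulli : ((d : ℝ) + 1) * z - d ≤ z ^ (d + 1) := by
    have := one_add_mul_sub_le_pow (show -1 ≤ z by linarith) (d + 1)
    push_cast at this
    linarith
  calc hcCrit (d + 1) * q ^ d * ((d : ℝ) ^ 2 * (1 - q) - 1)
      = (((d : ℝ) + 1) * z - d) / z ^ (d + 1) := by
        rw [hcCrit_succ, hz, div_pow, mul_pow, pow_succ, pow_succ, pow_succ]
        field_simp
        ring
    _ ≤ 1 := (div_le_one (by positivity)).mpr bernoulli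

lemma prod_le_mean_pow_card {ι : Type*} [Fintype ι] [Nonempty ι] {z : ι → ℝ}
    (hz : ∀ i, 0 ≤ z i) :
    ∏ i, z i ≤ ((∑ i, z i) / Fintype.card ι) ^ Fintype.card ι := by
  have hcard : 0 < (Fintype.card ι : ℝ) := mod_cast Fintype.card_pos
  have h := Real.geom_mean_le_arith_mean univ (fun _ => 1) z (by simp) (by simpa using hcard)
    (fun i _ => hz i)
  simp only [Real.rpow_one, sum_const, card_univ, nsmul_eq_mul, mul_one, one_mul] at h
  have hprod := prod_nonneg fun i (_ : i ∈ univ) => hz i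
  rwa [Real.rpow_inv_le_iff_of_pos hprod (div_nonneg (sum_nonneg fun i _ => hz i) hcard.le) hcard,
    Real.rpow_natCast] at h

lemma hcTreeProb_le_of_prod_le {ι : Type*} [Fintype ι] {lam y : ℝ} (hlam : 0 ≤ lam) {p : ι → ℝ}
    (hp : ∀ i, p i ≤ 1) (hy : ∏ i, (1 - p i) ≤ y) :
    hcTreeProb lam p ≤ lam * y / (1 + lam * y) := by
  have hx0 : 0 ≤ lam * ∏ i, (1 - p i) :=
    mul_nonneg hlam (prod_nonneg fun i _ => sub_nonneg.mpr (hp i))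
  have hxy : lam * ∏ i, (1 - p i) ≤ lam * y := mul_le_mul_of_nonneg_left hy hlam
  rw [hcTreeProb, div_le_div_iff₀ (by linarith) (by linarith)]
  linarith

/-- The one-variable problem behind the contraction of the tree recursion. -/
lemma subcritical_mul_pow_div_mul_le {d : ℕ} (hd : 2 ≤ d) {δ lam q : ℝ} (hδ : 0 ≤ δ)
    (hlam0 : 0 ≤ lam) (hlam : lam ≤ (1 - δ) * hcCrit (d + 1)) (hq : q ∈ Set.Icc 0 1) :
    lam * q ^ d / (1 + lam * q ^ d) * ((d : ℝ) ^ 2 * (1 - q)) ≤ 1 - δ / 9 := by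
  obtain ⟨hq0, hq1⟩ := hq
  have hd2 : (2 : ℝ) ≤ d := mod_cast hd
  have hcrit := hcCrit_succ_pos hd
  have hδ1 : 0 ≤ 1 - δ := nonneg_of_mul_nonneg_left (hlam0.trans hlam) hcrit
  set x := lam * q ^ d with hx
  have hx0 : 0 ≤ x := by positivity
  have hx8 : x ≤ 8 := by
    have hlam8 : lam ≤ 8 := by nlinarith [hcCrit_succ_mul_pred_le hd]
    exact (mul_le_of_le_one_right hlam0 (pow_le_one₀ hq0 hq1)).trans hlam8
  have hcritical : x * ((d : ℝ) ^ 2 * (1 - q) - 1) ≤ 1 - δ := by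
    rcases le_total ((d : ℝ) ^ 2 * (1 - q) - 1) 0 with h | h
    · exact (mul_nonpos_of_nonneg_of_nonpos hx0 h).trans hδ1
    · calc x * ((d : ℝ) ^ 2 * (1 - q) - 1)
          ≤ (1 - δ) * hcCrit (d + 1) * q ^ d * ((d : ℝ) ^ 2 * (1 - q) - 1) := by
            rw [hx]; gcongr
        _ = (1 - δ) * (hcCrit (d + 1) * q ^ d * ((d : ℝ) ^ 2 * (1 - q) - 1)) := by ring
        _ ≤ 1 - δ := mul_le_of_le_one_right hδ1 (hcCrit_succ_mul_pow_mul_le hd hq0)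
  rw [div_mul_eq_mul_div, div_le_iff₀ (by linarith)]
  nlinarith

/-- Cauchy–Schwarz and AM–GM reduce to the case of equal `p i`. -/
lemma hcTreeProb_mul_sq_sum_sqrt_le {ι : Type*} [Fintype ι] (hι : 2 ≤ Fintype.card ι) {δ lam : ℝ}
    (hδ : 0 ≤ δ) (hlam0 : 0 ≤ lam) (hlam : lam ≤ (1 - δ) * hcCrit (Fintype.card ι + 1)) {p : ι → ℝ}
    (hp : ∀ i, p i ∈ Set.Icc 0 1) :
    hcTreeProb lam p * (∑ i, √(p i)) ^ 2 ≤ 1 - δ / 9 := by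
  have : Nonempty ι := Fintype.card_pos_iff.mp (by omega)
  set d := Fintype.card ι
  have hd0 : (0 : ℝ) < d := mod_cast Fintype.card_pos
  set q := (∑ i, (1 - p i)) / d with hq
  have hq0 : 0 ≤ q := div_nonneg (sum_nonneg fun i _ => sub_nonneg.mpr (hp i).2) hd0.le
  have hsum : ∑ i, p i = d * (1 - q) := by
    rw [hq, sum_sub_distrib, sum_const, card_univ, nsmul_one]
    field_simp
    ring
  have hq1 : q ≤ 1 := by
    have : 0 ≤ ∑ i, p i := sum_nonneg fun i _ => (hp i).1
    nlinarith
  have cauchy_schwarz : (∑ i, √(p i)) ^ 2 ≤ (d : ℝ) ^ 2 * (1 - q) := by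
    calc (∑ i, √(p i)) ^ 2 ≤ d * ∑ i, √(p i) ^ 2 := sq_sum_le_card_mul_sum_sq
      _ = (d : ℝ) ^ 2 * (1 - q) := by simp_rw [Real.sq_sqrt (hp _).1, hsum]; ring
  have am_gm : ∏ i, (1 - p i) ≤ q ^ d := prod_le_mean_pow_card fun i => sub_nonneg.mpr (hp i).2
  calc hcTreeProb lam p * (∑ i, √(p i)) ^ 2
      ≤ lam * q ^ d / (1 + lam * q ^ d) * ((d : ℝ) ^ 2 * (1 - q)) :=
        mul_le_mul (hcTreeProb_le_of_prod_le hlam0 (fun i => (hp i).2) am_gm) cauchy_schwarz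
          (sq_nonneg _) (by positivity)
    _ ≤ 1 - δ / 9 := subcritical_mul_pow_div_mul_le hι hδ hlam0 hlam ⟨hq0, hq1⟩

lemma sqrt_hcTreeProb_mul_sum_sqrt_le {ι : Type*} [Fintype ι] (hι : 2 ≤ Fintype.card ι)
    {δ lam : ℝ} (hδ : 0 ≤ δ) (hlam0 : 0 ≤ lam)
    (hlam : lam ≤ (1 - δ) * hcCrit (Fintype.card ι + 1)) {p : ι → ℝ} (hp : ∀ i, p i ∈ Set.Icc 0 1) :
    √(hcTreeProb lam p) * ∑ i, √(p i) ≤ 1 - δ / 18 := by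
  have h0 : 0 ≤ hcTreeProb lam p := by
    have : 0 ≤ ∏ i, (1 - p i) := prod_nonneg fun i _ => sub_nonneg.mpr (hp i).2
    rw [hcTreeProb]
    positivity
  have hsq : (√(hcTreeProb lam p) * ∑ i, √(p i)) ^ 2 ≤ 1 - δ / 9 := by
    rw [mul_pow, Real.sq_sqrt h0]
    exact hcTreeProb_mul_sq_sum_sqrt_le hι hδ hlam0 hlam hp
  nlinarith [sq_nonneg (√(hcTreeProb lam p) * ∑ i, √(p i) - 1)]

/-! ### Exponential moments -/

open ProbabilityTheory in
/-- Hoeffding's lemma for a two-point distribution. -/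
lemma two_point_mgf_le {p : ℝ} (hp : p ∈ Set.Icc 0 1) (a b s : ℝ) :
    (1 - p) * Real.exp (s * a) + p * Real.exp (s * b)
      ≤ Real.exp (s * ((1 - p) * a + p * b) + s ^ 2 * (b - a) ^ 2 / 8) := by
  set m := (1 - p) * a + p * b with hm
  have hsupp : ∀ᵐ x ∂Ber(b, a, ⟨p, hp⟩), x ∈ Set.Icc (min a b) (max a b) := by
    rw [bernoulliMeasure_def, MeasureTheory.ae_add_measure_iff]
    constructor <;> refine MeasureTheory.Measure.ae_smul_measure ?_ _ <;>
      simp [MeasureTheory.ae_dirac_eq]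
  have hmean : ∫ x, x ∂Ber(b, a, ⟨p, hp⟩) = m := by
    rw [integral_bernoulliMeasure, hm, smul_eq_mul, smul_eq_mul]
    ring
  have hrange : (‖max a b - min a b‖ / 2) ^ 2 = (b - a) ^ 2 / 4 := by
    rw [max_sub_min_eq_abs, Real.norm_eq_abs, abs_abs, div_pow, sq_abs]
    norm_num
  have h := (hasSubgaussianMGF_of_mem_Icc aemeasurable_id hsupp).mgf_le s
  simp only [id_eq, hmean, mgf, integral_bernoulliMeasure, smul_eq_mul, NNReal.coe_pow,
    NNReal.coe_div, coe_nnnorm, NNReal.coe_ofNat, hrange] at h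
  calc (1 - p) * Real.exp (s * a) + p * Real.exp (s * b)
      = Real.exp (s * m) * (p * Real.exp (s * (b - m)) + (1 - p) * Real.exp (s * (a - m))) := by
        simp only [mul_sub, Real.exp_sub]
        field_simp
        ring
    _ ≤ Real.exp (s * m) * Real.exp ((b - a) ^ 2 / 4 * s ^ 2 / 2) := by gcongr
    _ = Real.exp (s * m + s ^ 2 * (b - a) ^ 2 / 8) := by
        rw [← Real.exp_add]
        congr 1
        ring

lemma two_point_mixture_le_exp {p : ℝ} (hp : p ∈ Set.Icc 0 1) {a b s x y D E : ℝ}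
    (hx : x ≤ Real.exp (s * a + E)) (hy : y ≤ Real.exp (s * b + E)) (hab : |b - a| ≤ D) :
    (1 - p) * x + p * y ≤ Real.exp (s * ((1 - p) * a + p * b) + s ^ 2 * D ^ 2 / 8 + E) := by
  obtain ⟨hp0, hp1⟩ := hp
  have : 0 ≤ 1 - p := sub_nonneg.mpr hp1
  have hsq : (b - a) ^ 2 ≤ D ^ 2 := sq_le_sq' (neg_le_of_abs_le hab) (le_of_abs_le hab)
  calc (1 - p) * x + p * y
      ≤ (1 - p) * Real.exp (s * a + E) + p * Real.exp (s * b + E) := by gcongr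
    _ = ((1 - p) * Real.exp (s * a) + p * Real.exp (s * b)) * Real.exp E := by
        rw [Real.exp_add, Real.exp_add]
        ring
    _ ≤ Real.exp (s * ((1 - p) * a + p * b) + s ^ 2 * (b - a) ^ 2 / 8) * Real.exp E := by
        gcongr
        exact two_point_mgf_le ⟨hp0, hp1⟩ a b s
    _ ≤ Real.exp (s * ((1 - p) * a + p * b) + s ^ 2 * D ^ 2 / 8) * Real.exp E := by gcongr
    _ = Real.exp (s * ((1 - p) * a + p * b) + s ^ 2 * D ^ 2 / 8 + E) := (Real.exp_add _ _).symm

lemma sum_filter_lt_le_exp_of_mgf_le {Ω : Type*} [Fintype Ω] {μ f : Ω → ℝ} (hμ : ∀ x, 0 ≤ μ x)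
    {m v t : ℝ} (hv : 0 ≤ v) (ht : 0 ≤ t)
    (hmgf : ∀ s, 0 ≤ s →
      _root_.expect μ (fun x => Real.exp (s * f x)) ≤ Real.exp (s * m + s ^ 2 * v / 2)) :
    ∑ x ∈ univ.filter (fun x => m + t < f x), μ x ≤ Real.exp (-t ^ 2 / (2 * v)) := by
  have chernoff : ∀ s, 0 ≤ s →
      ∑ x ∈ univ.filter (fun x => m + t < f x), μ x ≤ Real.exp (s ^ 2 * v / 2 - s * t) := by
    intro s hs
    calc ∑ x ∈ univ.filter (fun x => m + t < f x), μ x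
        ≤ ∑ x ∈ univ.filter (fun x => m + t < f x), μ x * Real.exp (s * f x - s * (m + t)) := by
          refine sum_le_sum fun x hx => le_mul_of_one_le_right (hμ x) (Real.one_le_exp ?_)
          have := (mem_filter.mp hx).2
          nlinarith
      _ ≤ ∑ x, μ x * Real.exp (s * f x - s * (m + t)) :=
          sum_le_sum_of_subset_of_nonneg (filter_subset _ _) fun x _ _ =>
            mul_nonneg (hμ x) (Real.exp_nonneg _)
      _ = _root_.expect μ (fun x => Real.exp (s * f x)) * Real.exp (-(s * (m + t))) := by
          simp only [_root_.expect, sum_mul, sub_eq_add_neg, Real.exp_add, mul_assoc]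
      _ ≤ Real.exp (s * m + s ^ 2 * v / 2) * Real.exp (-(s * (m + t))) := by
          gcongr
          exact hmgf s hs
      _ = Real.exp (s ^ 2 * v / 2 - s * t) := by rw [← Real.exp_add]; congr 1; ring
  -- For `v = 0` the junk value `t / 0 = 0` still gives the trivial bound `1`.
  refine (chernoff (t / v) (by positivity)).trans_eq ?_
  rcases hv.eq_or_lt with rfl | hv
  · simp
  · congr 1
    field_simp
    ring

/-! ### The hardcore model on induced subgraphs -/

section InducedSubgraphs

variable {U : Type*} {G : SimpleGraph U} {lam : U → ℝ}

/-- Unnormalized mean of `f` for the hardcore model on the subgraph induced by `S`. -/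
def hcSum (G : SimpleGraph U) (lam : U → ℝ) (S : Finset U) (f : Finset U → ℝ) : ℝ :=
  ∑ σ ∈ S.powerset, hcWeight G lam σ * f σ

/-- Partition function of the hardcore model on the subgraph induced by `S`. -/
def hcZ (G : SimpleGraph U) (lam : U → ℝ) (S : Finset U) : ℝ := hcSum G lam S fun _ => 1

/-- Mean of `f` for the hardcore model on the subgraph induced by `S`. -/
def hcMean (G : SimpleGraph U) (lam : U → ℝ) (S : Finset U) (f : Finset U → ℝ) : ℝ :=
  hcSum G lam S f / hcZ G lam S

/-- The vertices of `S` that may still be occupied once `u` is: those outside the closed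
neighbourhood of `u`. -/
def nonNbrs (G : SimpleGraph U) (S : Finset U) (u : U) : Finset U :=
  {w ∈ S | w ≠ u ∧ ¬ G.Adj u w}

/-- For `u ∈ S`, the probability that `u` is occupied in the hardcore model on the subgraph induced
by `S`. -/
def hcProb (G : SimpleGraph U) (lam : U → ℝ) (S : Finset U) (u : U) : ℝ :=
  lam u * hcZ G lam (nonNbrs G S u) / hcZ G lam S

lemma hcWeight_nonneg (hlam : ∀ v, 0 ≤ lam v) (σ : Finset U) : 0 ≤ hcWeight G lam σ := by
  unfold hcWeight
  split_ifs
  · exact prod_nonneg fun v _ => hlam v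
  · exact le_rfl

lemma hcZ_pos (hlam : ∀ v, 0 ≤ lam v) (S : Finset U) : 0 < hcZ G lam S :=
  sum_pos' (fun σ _ => mul_nonneg (hcWeight_nonneg hlam σ) zero_le_one)
    ⟨∅, empty_mem_powerset S, by simp [hcWeight, IndepSet]⟩

lemma hcZ_mono (hlam : ∀ v, 0 ≤ lam v) {S T : Finset U} (h : S ⊆ T) :
    hcZ G lam S ≤ hcZ G lam T :=
  sum_le_sum_of_subset_of_nonneg (powerset_mono.mpr h)
    fun σ _ _ => mul_nonneg (hcWeight_nonneg hlam σ) zero_le_one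

lemma nonNbrs_subset (S : Finset U) (u : U) : nonNbrs G S u ⊆ S := filter_subset _ _

lemma hcProb_nonneg (hlam : ∀ v, 0 ≤ lam v) (S : Finset U) (u : U) : 0 ≤ hcProb G lam S u :=
  div_nonneg (mul_nonneg (hlam u) (hcZ_pos hlam _).le) (hcZ_pos hlam S).le

lemma hcProb_le_fugacity (hlam : ∀ v, 0 ≤ lam v) (S : Finset U) (u : U) :
    hcProb G lam S u ≤ lam u := by
  rw [hcProb, div_le_iff₀ (hcZ_pos hlam S)]
  exact mul_le_mul_of_nonneg_left (hcZ_mono hlam (nonNbrs_subset S u)) (hlam u)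

lemma expect_hardcore [Fintype U] (f : Finset U → ℝ) :
    _root_.expect (hardcore G lam) f = hcMean G lam univ f := by
  simp only [_root_.expect, hardcore, hcMean, hcZ, hcSum, powerset_univ, mul_one, sum_div,
    div_mul_eq_mul_div]

lemma hardcore_nonneg [Fintype U] (hlam : ∀ v, 0 ≤ lam v) (σ : Finset U) :
    0 ≤ hardcore G lam σ :=
  div_nonneg (hcWeight_nonneg hlam σ) (sum_nonneg fun τ _ => hcWeight_nonneg hlam τ)

lemma card_nbrs_le_degree [G.LocallyFinite] (S : Finset U) (u : U) :
    #{w ∈ S | G.Adj u w} ≤ G.degree u := by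
  rw [← G.card_neighborFinset_eq_degree]
  exact card_le_card fun w hw => (G.mem_neighborFinset u w).mpr (mem_filter.mp hw).2

lemma card_nbrs_lt_degree [G.LocallyFinite] {S : Finset U} {u v : U} (huv : G.Adj u v)
    (hv : v ∉ S) : #{w ∈ S | G.Adj u w} < G.degree u := by
  rw [← G.card_neighborFinset_eq_degree]
  refine card_lt_card ((ssubset_iff_of_subset ?_).mpr ⟨v, ?_, ?_⟩)
  · exact fun w hw => (G.mem_neighborFinset u w).mpr (mem_filter.mp hw).2
  · exact (G.mem_neighborFinset u v).mpr huv
  · exact fun h => hv (mem_filter.mp h).1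

variable [DecidableEq U]

lemma nonNbrs_subset_erase (S : Finset U) (u : U) : nonNbrs G S u ⊆ S.erase u := by
  grind [nonNbrs]

lemma erase_sdiff_nbrs (S : Finset U) (u : U) :
    S.erase u \ {w ∈ S | G.Adj u w} = nonNbrs G S u := by
  grind [nonNbrs]

lemma indepSet_insert {σ : Finset U} {u : U} :
    IndepSet G (insert u σ) ↔ (∀ w ∈ σ, ¬ G.Adj u w) ∧ IndepSet G σ := by
  simp only [IndepSet, forall_mem_insert, G.irrefl, not_false_eq_true, true_and, forall_and,
    G.adj_comm _ u]
  tauto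

lemma hcWeight_insert {σ : Finset U} {u : U} (hu : u ∉ σ) :
    hcWeight G lam (insert u σ)
      = if ∀ w ∈ σ, ¬ G.Adj u w then lam u * hcWeight G lam σ else 0 := by
  simp only [hcWeight, indepSet_insert, prod_insert hu, ite_and, mul_ite, mul_zero]

/-- Splitting the independent sets according to whether they contain `u`. -/
lemma hcSum_eq_add {S : Finset U} {u : U} (hu : u ∈ S) (f : Finset U → ℝ) :
    hcSum G lam S f = hcSum G lam (S.erase u) f
      + lam u * hcSum G lam (nonNbrs G S u) (fun σ => f (insert u σ)) := by
  have hfilter : {σ ∈ (S.erase u).powerset | ∀ w ∈ σ, ¬ G.Adj u w} = (nonNbrs G S u).powerset := by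
    ext σ
    simp only [nonNbrs, mem_filter, mem_powerset, subset_iff, mem_erase]
    grind
  unfold hcSum
  conv_lhs => rw [← insert_erase hu, sum_powerset_insert (notMem_erase u S)]
  rw [mul_sum, ← hfilter, sum_filter]
  refine congrArg _ (sum_congr rfl fun σ hσ => ?_)
  rw [hcWeight_insert fun h => notMem_erase u S (mem_powerset.mp hσ h), ite_mul, zero_mul,
    mul_assoc]

lemma hcZ_eq_add {S : Finset U} {u : U} (hu : u ∈ S) :
    hcZ G lam S = hcZ G lam (S.erase u) + lam u * hcZ G lam (nonNbrs G S u) :=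
  hcSum_eq_add hu _

lemma hcZ_erase (hlam : ∀ v, 0 ≤ lam v) {S : Finset U} {u : U} (hu : u ∈ S) :
    hcZ G lam (S.erase u) = hcZ G lam S * (1 - hcProb G lam S u) := by
  rw [hcProb, mul_one_sub, mul_div_cancel₀ _ (hcZ_pos hlam S).ne', hcZ_eq_add hu]
  ring

omit [DecidableEq U] in
lemma hcProb_le_one (hlam : ∀ v, 0 ≤ lam v) {S : Finset U} {u : U} (hu : u ∈ S) :
    hcProb G lam S u ≤ 1 := by
  classical
  have h := hcZ_pos (G := G) hlam (S.erase u)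
  rw [hcZ_erase hlam hu] at h
  linarith [pos_of_mul_pos_right h (hcZ_pos hlam S).le]

/-- The law of total expectation, conditioning on the occupation of `u`. -/
lemma hcMean_eq_add (hlam : ∀ v, 0 ≤ lam v) {S : Finset U} {u : U} (hu : u ∈ S)
    (f : Finset U → ℝ) :
    hcMean G lam S f = (1 - hcProb G lam S u) * hcMean G lam (S.erase u) f
      + hcProb G lam S u * hcMean G lam (nonNbrs G S u) (fun σ => f (insert u σ)) := by
  have hS := (hcZ_pos (G := G) hlam S).ne'
  have hvacant := (hcZ_pos (G := G) hlam (S.erase u)).ne'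
  have hoccupied := (hcZ_pos (G := G) hlam (nonNbrs G S u)).ne'
  have hprob : 1 - hcProb G lam S u = hcZ G lam (S.erase u) / hcZ G lam S := by
    rw [hcZ_erase hlam hu, mul_div_cancel_left₀ _ hS]
  rw [hprob, hcProb, hcMean, hcMean, hcMean, hcSum_eq_add hu]
  field_simp

/-! ### The effect of a single vertex on the mean of a Lipschitz function -/

/-- `f` is `κ`-Lipschitz for the Hamming metric on finite sets. -/
def HammingLipschitz (κ : ℝ) (f : Finset U → ℝ) : Prop :=
  ∀ (σ : Finset U) (v : U), v ∉ σ → |f (insert v σ) - f σ| ≤ κ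

/-- For `u ∈ S`, the distance between the conditional means of `f` given that `u` is occupied and
given that it is vacant, in the hardcore model on the subgraph induced by `S`. -/
def hcGap (G : SimpleGraph U) (lam : U → ℝ) (S : Finset U) (u : U) (f : Finset U → ℝ) : ℝ :=
  |hcMean G lam (nonNbrs G S u) (fun σ => f (insert u σ)) - hcMean G lam (S.erase u) f|

variable {κ : ℝ} {f : Finset U → ℝ}

lemma HammingLipschitz.nonneg (hf : HammingLipschitz κ f) (u : U) : 0 ≤ κ :=
  (abs_nonneg _).trans (hf ∅ u (notMem_empty u))

lemma HammingLipschitz.comp_insert (hf : HammingLipschitz κ f) (u : U) :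
    HammingLipschitz κ (fun σ => f (insert u σ)) := by
  intro σ v hv
  by_cases hvu : v = u
  · subst hvu
    simpa using hf.nonneg v
  · simp only [insert_comm u v]
    exact hf _ _ (by simp [hvu, hv])

lemma HammingLipschitz.abs_hcMean_comp_insert_sub_le (hlam : ∀ v, 0 ≤ lam v)
    (hf : HammingLipschitz κ f) {S : Finset U} {u : U} (hu : u ∉ S) :
    |hcMean G lam S (fun σ => f (insert u σ)) - hcMean G lam S f| ≤ κ := by
  have hZ := hcZ_pos (G := G) hlam S
  rw [hcMean, hcMean, ← sub_div, abs_div, abs_of_pos hZ, div_le_iff₀ hZ]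
  calc |hcSum G lam S (fun σ => f (insert u σ)) - hcSum G lam S f|
      = |∑ σ ∈ S.powerset, hcWeight G lam σ * (f (insert u σ) - f σ)| := by
        simp only [hcSum, mul_sub, sum_sub_distrib]
    _ ≤ ∑ σ ∈ S.powerset, hcWeight G lam σ * κ := by
        refine (abs_sum_le_sum_abs _ _).trans (sum_le_sum fun σ hσ => ?_)
        rw [abs_mul, abs_of_nonneg (hcWeight_nonneg hlam σ)]
        exact mul_le_mul_of_nonneg_left (hf σ u fun h => hu (mem_powerset.mp hσ h))
          (hcWeight_nonneg hlam σ)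
    _ = κ * hcZ G lam S := by
        simp only [hcZ, hcSum, mul_one, ← sum_mul]
        ring

lemma abs_hcMean_erase_sub (hlam : ∀ v, 0 ≤ lam v) {S : Finset U} {u : U} (hu : u ∈ S)
    (f : Finset U → ℝ) :
    |hcMean G lam (S.erase u) f - hcMean G lam S f| = hcProb G lam S u * hcGap G lam S u f := by
  rw [hcMean_eq_add hlam hu, hcGap, ← abs_of_nonneg (hcProb_nonneg (G := G) hlam S u), ← abs_mul,
    abs_of_nonneg (hcProb_nonneg hlam S u), abs_sub_comm]
  congr 1
  ring

lemma abs_hcMean_erase_sub_le (hlam : ∀ v, 0 ≤ lam v) {S : Finset U} {u : U} (hu : u ∈ S) {A : ℝ}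
    (hA : √(hcProb G lam S u) * hcGap G lam S u f ≤ A) :
    |hcMean G lam (S.erase u) f - hcMean G lam S f| ≤ A * √(hcProb G lam S u) := by
  rw [abs_hcMean_erase_sub hlam hu]
  nth_rw 1 [← Real.mul_self_sqrt (hcProb_nonneg (G := G) hlam S u)]
  rw [mul_assoc, mul_comm]
  exact mul_le_mul_of_nonneg_right hA (Real.sqrt_nonneg _)

/-- The vertices of `T` are deleted one by one, each with its occupation probability at the time of
its deletion; missing vertices, when `#T < k`, count as having probability `0`. -/
lemma exists_probs_sdiff (hlam : ∀ v, 0 ≤ lam v) {M : ℝ} (hM0 : 0 ≤ M) (hM : ∀ v, lam v ≤ M)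
    {A : ℝ} {k : ℕ} {S T : Finset U} (hTS : T ⊆ S) (hT : #T ≤ k)
    (hA : ∀ S' ⊆ S, ∀ w ∈ S', w ∈ T → √(hcProb G lam S' w) * hcGap G lam S' w f ≤ A) :
    ∃ p : Fin k → ℝ, (∀ i, p i ∈ Set.Icc 0 1) ∧ (∀ i, p i ≤ M) ∧
      hcZ G lam (S \ T) = hcZ G lam S * ∏ i, (1 - p i) ∧
      |hcMean G lam (S \ T) f - hcMean G lam S f| ≤ A * ∑ i, √(p i) := by
  induction k generalizing S T with
  | zero =>
    obtain rfl := card_eq_zero.mp (Nat.le_zero.mp hT)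
    exact ⟨0, by simp, by simp, by simp, by simp⟩
  | succ k ih =>
    rcases T.eq_empty_or_nonempty with rfl | ⟨u, huT⟩
    · exact ⟨0, by simp, by simp [hM0], by simp, by simp⟩
    have huS := hTS huT
    obtain ⟨p, hp, hpM, hZ, hmean⟩ := ih (S := S.erase u) (T := T.erase u)
      (erase_subset_erase u hTS) (by rw [card_erase_of_mem huT]; omega)
      fun S' hS' w hw hwT => hA S' (hS'.trans (erase_subset u S)) w hw (mem_of_mem_erase hwT)
    have hsdiff : S.erase u \ T.erase u = S \ T := by grind
    rw [hsdiff] at hZ hmean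
    refine ⟨Fin.cons (hcProb G lam S u) p, ?_, ?_, ?_, ?_⟩
    · exact Fin.cases ⟨hcProb_nonneg hlam S u, hcProb_le_one hlam huS⟩ hp
    · exact Fin.cases ((hcProb_le_fugacity hlam S u).trans (hM u)) hpM
    · rw [hZ, hcZ_erase hlam huS, Fin.prod_univ_succ]
      simp only [Fin.cons_zero, Fin.cons_succ, mul_assoc]
    · have hu := abs_hcMean_erase_sub_le hlam huS (hA S Subset.rfl u huS huT)
      simp only [Fin.sum_univ_succ, Fin.cons_zero, Fin.cons_succ, mul_add]
      linarith [abs_sub_le (hcMean G lam (S \ T) f) (hcMean G lam (S.erase u) f)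
        (hcMean G lam S f)]

/-- One step of the recursion on Weitz's tree of self-avoiding walks. -/
lemma exists_hcProb_eq_hcTreeProb_and_hcGap_le (hlam : ∀ v, 0 ≤ lam v) {M : ℝ}
    (hM : ∀ v, lam v ≤ M) (hf : HammingLipschitz κ f) {A : ℝ} {k : ℕ} {S : Finset U} {u : U}
    (hu : u ∈ S) (hk : #{w ∈ S | G.Adj u w} ≤ k)
    (hA : ∀ S' ⊆ S.erase u, ∀ w ∈ S', G.Adj u w →
      √(hcProb G lam S' w) * hcGap G lam S' w f ≤ A) :
    ∃ p : Fin k → ℝ, (∀ i, p i ∈ Set.Icc 0 1) ∧ (∀ i, p i ≤ M) ∧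
      hcProb G lam S u = hcTreeProb (lam u) p ∧ hcGap G lam S u f ≤ κ + A * ∑ i, √(p i) := by
  have hsub : {w ∈ S | G.Adj u w} ⊆ S.erase u := fun w hw => by
    obtain ⟨hwS, huw⟩ := mem_filter.mp hw
    exact mem_erase.mpr ⟨huw.ne', hwS⟩
  obtain ⟨p, hp, hpM, hZ, hmean⟩ := exists_probs_sdiff hlam ((hlam u).trans (hM u)) hM hsub hk
    fun S' hS' w hw hwT => hA S' hS' w hw (mem_filter.mp hwT).2
  rw [erase_sdiff_nbrs] at hZ hmean
  refine ⟨p, hp, hpM, ?_, ?_⟩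
  · have hvacant := (hcZ_pos (G := G) hlam (S.erase u)).ne'
    rw [hcProb, hcTreeProb, hcZ_eq_add hu, hZ, mul_left_comm, ← mul_one_add,
      mul_div_mul_left _ _ hvacant]
  · have hu' : u ∉ nonNbrs G S u := fun h => notMem_erase u S (nonNbrs_subset_erase S u h)
    have hshift := hf.abs_hcMean_comp_insert_sub_le (G := G) hlam hu'
    rw [hcGap]
    linarith [abs_sub_le (hcMean G lam (nonNbrs G S u) (fun σ => f (insert u σ)))
      (hcMean G lam (nonNbrs G S u) f) (hcMean G lam (S.erase u) f)]

/-- Azuma–Hoeffding: the vertices of `S` are revealed one by one. -/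
lemma hcMean_exp_le (hlam : ∀ v, 0 ≤ lam v) {D : ℝ}
    (hD : ∀ g, HammingLipschitz κ g → ∀ T, ∀ u ∈ T, hcGap G lam T u g ≤ D)
    (hf : HammingLipschitz κ f) (S : Finset U) (s : ℝ) :
    hcMean G lam S (fun σ => Real.exp (s * f σ))
      ≤ Real.exp (s * hcMean G lam S f + s ^ 2 * (#S * D ^ 2 / 8)) := by
  induction S using Finset.strongInduction generalizing f with
  | H S ih =>
    rcases S.eq_empty_or_nonempty with rfl | ⟨u, hu⟩
    · simp [hcMean, hcZ, hcSum, hcWeight, IndepSet]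
    set E := s ^ 2 * (#(S.erase u) * D ^ 2 / 8) with hE
    have hvacant : hcMean G lam (S.erase u) (fun σ => Real.exp (s * f σ))
        ≤ Real.exp (s * hcMean G lam (S.erase u) f + E) :=
      ih _ (erase_ssubset hu) hf
    have hoccupied : hcMean G lam (nonNbrs G S u) (fun σ => Real.exp (s * f (insert u σ)))
        ≤ Real.exp (s * hcMean G lam (nonNbrs G S u) (fun σ => f (insert u σ)) + E) := by
      refine (ih _ ((nonNbrs_subset_erase S u).trans_ssubset (erase_ssubset hu))
        (hf.comp_insert u)).trans ?_
      have := card_le_card (nonNbrs_subset_erase (G := G) S u)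
      rw [hE]
      gcongr
    have hcard : (#(S.erase u) : ℝ) = #S - 1 := by
      rw [card_erase_of_mem hu, Nat.cast_pred (card_pos.mpr ⟨u, hu⟩)]
    rw [hcMean_eq_add hlam hu, hcMean_eq_add hlam hu f]
    refine (two_point_mixture_le_exp ⟨hcProb_nonneg hlam S u, hcProb_le_one hlam hu⟩ hvacant
      hoccupied (hD f hf S u hu)).trans_eq ?_
    rw [hE, hcard]
    ring_nf

variable [G.LocallyFinite] {d : ℕ} {δ : ℝ}

/-- The bound is the fixed point of `A ↦ κ √λ_Δ + (1 - δ / 18) A`. -/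
lemma sqrt_hcProb_mul_hcGap_le (hd : 2 ≤ d) (hδ : 0 < δ) (hdeg : ∀ v, G.degree v ≤ d + 1)
    (hlam : ∀ v, 0 ≤ lam v) (hcrit : ∀ v, lam v ≤ (1 - δ) * hcCrit (d + 1))
    (hf : HammingLipschitz κ f) {S : Finset U} {u : U} (hu : u ∈ S)
    (hk : #{w ∈ S | G.Adj u w} ≤ d) :
    √(hcProb G lam S u) * hcGap G lam S u f ≤ κ * √(hcCrit (d + 1)) * (18 / δ) := by
  set A := κ * √(hcCrit (d + 1)) * (18 / δ) with hA
  have hM (v : U) : lam v ≤ hcCrit (d + 1) := by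
    nlinarith [hcrit v, hcCrit_succ_pos hd]
  induction S using Finset.strongInduction generalizing u with
  | H S ih =>
    have hnbr (T) (hT : T ⊆ S.erase u) (w) (hw : w ∈ T) (huw : G.Adj u w) :
        √(hcProb G lam T w) * hcGap G lam T w f ≤ A := by
      have huT : u ∉ T := fun h => notMem_erase u S (hT h)
      refine ih T (hT.trans_ssubset (erase_ssubset hu)) hw ?_
      exact Nat.le_of_lt_succ ((card_nbrs_lt_degree huw.symm huT).trans_le (hdeg w))
    obtain ⟨p, hp, -, hprob, hgap⟩ :=
      exists_hcProb_eq_hcTreeProb_and_hcGap_le hlam hM hf hu hk hnbr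
    have hcontract : √(hcProb G lam S u) * ∑ i, √(p i) ≤ 1 - δ / 18 := by
      rw [hprob]
      exact sqrt_hcTreeProb_mul_sum_sqrt_le (by rwa [Fintype.card_fin]) hδ.le (hlam u)
        (by rw [Fintype.card_fin]; exact hcrit u) hp
    have hsqrt : √(hcProb G lam S u) ≤ √(hcCrit (d + 1)) :=
      Real.sqrt_le_sqrt ((hcProb_le_fugacity hlam S u).trans (hM u))
    have hκ := hf.nonneg u
    calc √(hcProb G lam S u) * hcGap G lam S u f
        ≤ √(hcProb G lam S u) * (κ + A * ∑ i, √(p i)) := by gcongr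
      _ = κ * √(hcProb G lam S u) + A * (√(hcProb G lam S u) * ∑ i, √(p i)) := by ring
      _ ≤ κ * √(hcCrit (d + 1)) + A * (1 - δ / 18) := by gcongr
      _ = A := by rw [hA]; field_simp; ring

lemma hcGap_le (hd : 2 ≤ d) (hδ : 0 < δ) (hdeg : ∀ v, G.degree v ≤ d + 1)
    (hlam : ∀ v, 0 ≤ lam v) (hcrit : ∀ v, lam v ≤ (1 - δ) * hcCrit (d + 1))
    (hf : HammingLipschitz κ f) {S : Finset U} {u : U} (hu : u ∈ S) :
    hcGap G lam S u f ≤ κ * (1 + 432 / δ) := by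
  set M := hcCrit (d + 1)
  have hM0 : 0 < M := hcCrit_succ_pos hd
  have hM (v : U) : lam v ≤ M := by nlinarith [hcrit v]
  have hMd : M * (d + 1) ≤ 24 := by
    have hd2 : (2 : ℝ) ≤ d := mod_cast hd
    nlinarith [hcCrit_succ_mul_pred_le hd]
  have hnbr (T) (hT : T ⊆ S.erase u) (w) (hw : w ∈ T) (huw : G.Adj u w) :
      √(hcProb G lam T w) * hcGap G lam T w f ≤ κ * √M * (18 / δ) := by
    have huT : u ∉ T := fun h => notMem_erase u S (hT h)
    exact sqrt_hcProb_mul_hcGap_le hd hδ hdeg hlam hcrit hf hw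
      (Nat.le_of_lt_succ ((card_nbrs_lt_degree huw.symm huT).trans_le (hdeg w)))
  obtain ⟨p, -, hpM, -, hgap⟩ := exists_hcProb_eq_hcTreeProb_and_hcGap_le hlam hM hf hu
    ((card_nbrs_le_degree S u).trans (hdeg u)) hnbr
  have hsum : ∑ i, √(p i) ≤ (d + 1) * √M := by
    calc ∑ i, √(p i) ≤ ∑ _i : Fin (d + 1), √M :=
          sum_le_sum fun i _ => Real.sqrt_le_sqrt (hpM i)
      _ = (d + 1) * √M := by simp
  have hκ := hf.nonneg u
  calc hcGap G lam S u f ≤ κ + κ * √M * (18 / δ) * ∑ i, √(p i) := hgap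
    _ ≤ κ + κ * √M * (18 / δ) * ((d + 1) * √M) := by gcongr
    _ = κ + κ * (18 / δ) * (√M * √M * (d + 1)) := by ring
    _ ≤ κ + κ * (18 / δ) * 24 := by rw [Real.mul_self_sqrt hM0.le]; gcongr
    _ = κ * (1 + 432 / δ) := by ring

end InducedSubgraphs

theorem hardcore_lipschitz_concentration_general {V : Type*} [Fintype V] [DecidableEq V]
    {G : SimpleGraph V} [G.LocallyFinite] {Δ : ℕ} (hΔ : 3 ≤ Δ) (hdeg : ∀ v, G.degree v ≤ Δ)
    {δ : ℝ} (hδ : 0 < δ) {lam : V → ℝ} (hlam : ∀ v, 0 ≤ lam v)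
    (hcrit : ∀ v, lam v ≤ (1 - δ) * hcCrit Δ) {κ : ℝ} {f : Finset V → ℝ} (hκ : 0 < κ)
    (hf : HammingLipschitz κ f) {t : ℝ} (ht : 0 ≤ t) :
    ∑ σ ∈ univ.filter (fun σ => _root_.expect (hardcore G lam) f + t < f σ), hardcore G lam σ
      ≤ Real.exp (-(2 / (1 + 432 / δ) ^ 2 * t ^ 2) / (κ ^ 2 * Fintype.card V)) := by
  obtain ⟨d, rfl⟩ : ∃ d, Δ = d + 1 := ⟨Δ - 1, by omega⟩
  set D := κ * (1 + 432 / δ) with hD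
  have hgap (g) (hg : HammingLipschitz κ g) (S) (u) (hu : u ∈ S) : hcGap G lam S u g ≤ D :=
    hcGap_le (by omega) hδ hdeg hlam hcrit hg hu
  have hmgf (s : ℝ) (_ : 0 ≤ s) : _root_.expect (hardcore G lam) (fun σ => Real.exp (s * f σ))
      ≤ Real.exp (s * _root_.expect (hardcore G lam) f
        + s ^ 2 * (Fintype.card V * D ^ 2 / 4) / 2) := by
    rw [expect_hardcore, expect_hardcore]
    refine (hcMean_exp_le hlam hgap hf univ s).trans_eq ?_
    rw [card_univ]
    ring_nf
  refine (sum_filter_lt_le_exp_of_mgf_le (hardcore_nonneg hlam) (by positivity) ht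
    hmgf).trans_eq ?_
  congr 1
  rw [hD, mul_pow]
  field_simp
  ring

/-- Sub-Gaussian concentration of Hamming-Lipschitz functions for
the hardcore model at fugacity `λ ≤ (1−δ)·λ_Δ`. -/
theorem hardcore_lipschitz_concentration :
    ∀ δ : ℝ, δ ∈ Set.Ioo (0 : ℝ) 1 →
    ∃ c : ℝ, 0 < c ∧
      ∀ (V : Type) [Fintype V] [DecidableEq V] (G : SimpleGraph V)
        [DecidableRel G.Adj] (Δ : ℕ), 3 ≤ Δ →
        (∀ v : V, G.degree v ≤ Δ) →
        ∀ lam : ℝ, 0 < lam → lam ≤ (1 - δ) * hcCrit Δ →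
          ∀ (κ : ℝ) (f : Finset V → ℝ), 0 < κ →
            (∀ (σ : Finset V) (v : V), v ∉ σ → |f (insert v σ) - f σ| ≤ κ) →
            ∀ t : ℝ, 0 ≤ t →
              ∑ σ ∈ univ.filter
                  (fun σ : Finset V =>
                    expect (hardcore G (fun _ => lam)) f + t < f σ),
                  hardcore G (fun _ => lam) σ ≤
                Real.exp (-(c * t ^ 2) / (κ ^ 2 * Fintype.card V)) := by
  intro δ ⟨hδ, _⟩
  exact ⟨2 / (1 + 432 / δ) ^ 2, by positivity,
    fun _ _ _ _ _ _ hΔ hdeg _ hlam hcrit _ _ hκ hf _ ht =>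
      hardcore_lipschitz_concentration_general hΔ hdeg hδ (fun _ => hlam.le)
        (fun _ => hcrit) hκ hf ht⟩
end
end

section
/- For every δ ∈ (0,1) there exists c > 0 (depending only on δ) such that the following holds. Let G = (V,E) be a finite simple graph on n vertices with maximum degree at most Δ, where Δ ≥ 3 is an integer, let β ∈ [(Δ−2+δ)/(Δ−δ), (Δ−δ)/(Δ−2+δ)] and λ > 0, and let μ be the Ising model on G with edge activity β and external field λ. Let κ > 0 and let f : {±1}^V → ℝ satisfy |f(σ) − f(σ')| ≤ κ whenever σ, σ' ∈ {±1}^V differ in exactly one coordinate. Then for all t ≥ 0, P_μ( f − E_μ[f] > t ) ≤ exp(−c·t²/(κ²·n)). -/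
/-!
*Influence.* Let `M h f` be the mean of `f` under the Ising interaction with arbitrary nonnegative
site-dependent fields `h`, a vertex being pinned if its field allows a single spin. Flipping a
pinned spin `v` changes `M h f` by at most `κ` through the explicit dependence of `f` on `σ v`, and
it multiplies the odds at every neighbour of `v` by `β ^ 2`. Changing these odds one neighbour `u`
at a time, each change moves the probability of `σ u = +1` by at most `θ = |β - 1| / (β + 1)`,
hence the mean by at most `θ` times the effect of flipping a pinned spin at `u` while `v` stays
pinned. There `u` has at most `Δ - 1` free neighbours, and the assumption on `β` says that
`(Δ - 1) * θ ≤ 1 - δ`. So the effect is at most `κ * (1 + (1 - δ) + (1 - δ) ^ 2 + ⋯) = κ / δ` at a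
vertex with at most `Δ - 1` free neighbours, and at most `2 * κ / δ` at any vertex.

*Concentration.* Revealing the spins one at a time, the conditional mean of `f` takes at each step
two values at distance at most `2 * κ / δ`. By Hoeffding's lemma `f` is sub-Gaussian with variance
proxy `n * (2 * κ / δ) ^ 2 / 4`, and Chernoff's bound gives the tail with `c = δ ^ 2 / 2`.
-/

open Finset

noncomputable section
attribute [local instance] Classical.propDecidable

variable {V : Type*} [Fintype V] [DecidableEq V]

/-- Unnormalized Ising weight: `λ^{#plus} · β^{#monochromatic edges}`.  Each unordered
monochromatic edge is counted twice in the product over ordered pairs, whence the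
square root of `β`. -/
def isingWeight (G : SimpleGraph V) (β lam : ℝ) (σ : V → Bool) : ℝ :=
  lam ^ (univ.filter fun v => σ v = true).card *
    ∏ u : V, ∏ w : V, (if G.Adj u w ∧ σ u = σ w then Real.sqrt β else 1)

/-- The Ising model on `G` with edge activity `β` and external field `lam`,
as a probability distribution on `V → Bool` (`true` = spin `+1`). -/
def isingModel (G : SimpleGraph V) (β lam : ℝ) (σ : V → Bool) : ℝ :=
  isingWeight G β lam σ / ∑ τ : V → Bool, isingWeight G β lam τ

section FiniteDistributions

variable {Ω : Type*} [Fintype Ω] {μ : Ω → ℝ}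

lemma abs_expect_sub_expect_le (hμ : μ ∈ stdSimplex ℝ Ω) {f g : Ω → ℝ} {κ : ℝ}
    (hfg : ∀ x, |f x - g x| ≤ κ) : |expect μ f - expect μ g| ≤ κ :=
  calc |expect μ f - expect μ g| = |∑ x, μ x * (f x - g x)| := by
        simp only [_root_.expect, mul_sub, sum_sub_distrib]
    _ ≤ ∑ x, μ x * |f x - g x| :=
        (abs_sum_le_sum_abs _ _).trans_eq <| sum_congr rfl fun x _ => by
          rw [abs_mul, abs_of_nonneg (hμ.1 x)]
    _ ≤ ∑ x, μ x * κ := sum_le_sum fun x _ => mul_le_mul_of_nonneg_left (hfg x) (hμ.1 x)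
    _ = κ := by rw [← sum_mul, hμ.2, one_mul]

/-- The `PMF` with masses `μ x`, through which finite expectations become integrals. -/
def simplexPMF (hμ : μ ∈ stdSimplex ℝ Ω) : PMF Ω :=
  PMF.ofFintype (fun x => ENNReal.ofReal (μ x)) <| by
    rw [← ENNReal.ofReal_sum_of_nonneg fun x _ => hμ.1 x, hμ.2, ENNReal.ofReal_one]

variable [MeasurableSpace Ω] [MeasurableSingletonClass Ω]

lemma integral_simplexPMF (hμ : μ ∈ stdSimplex ℝ Ω) (f : Ω → ℝ) :
    ∫ x, f x ∂(simplexPMF hμ).toMeasure = expect μ f := by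
  simp only [PMF.integral_eq_sum, simplexPMF, PMF.ofFintype_apply,
    ENNReal.toReal_ofReal (hμ.1 _), smul_eq_mul, _root_.expect]

lemma measureReal_simplexPMF (hμ : μ ∈ stdSimplex ℝ Ω) (s : Finset Ω) :
    (simplexPMF hμ).toMeasure.real s = ∑ x ∈ s, μ x := by
  rw [MeasureTheory.measureReal_def, PMF.toMeasure_apply_finset]
  simp only [simplexPMF, PMF.ofFintype_apply]
  rw [← ENNReal.ofReal_sum_of_nonneg fun x _ => hμ.1 x,
    ENNReal.toReal_ofReal (sum_nonneg fun x _ => hμ.1 x)]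

end FiniteDistributions

section SubGaussian

variable {Ω : Type*} [Fintype Ω] {μ : Ω → ℝ} {f : Ω → ℝ}

lemma expect_exp_centered (s m : ℝ) :
    expect μ (fun x => Real.exp (s * (f x - m))) =
      Real.exp (-(s * m)) * expect μ fun x => Real.exp (s * f x) := by
  simp only [_root_.expect, mul_sum]
  refine sum_congr rfl fun x _ => ?_
  rw [mul_left_comm, ← Real.exp_add]
  ring_nf

lemma expect_exp_le_of_mem_Icc (hμ : μ ∈ stdSimplex ℝ Ω) {a b : ℝ}
    (hf : ∀ x, f x ∈ Set.Icc a b) :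
    expect μ (fun x => Real.exp (f x)) ≤ Real.exp (expect μ f + (b - a) ^ 2 / 8) := by
  let _ : MeasurableSpace Ω := ⊤
  have hoeffding := (ProbabilityTheory.hasSubgaussianMGF_of_mem_Icc
    (μ := (simplexPMF hμ).toMeasure) measurable_from_top.aemeasurable (.of_forall hf)).mgf_le 1
  rw [ProbabilityTheory.mgf, integral_simplexPMF, integral_simplexPMF, expect_exp_centered,
    Real.exp_neg, inv_mul_le_iff₀ (Real.exp_pos _), ← Real.exp_add] at hoeffding
  have variance : (((‖b - a‖₊ / 2) ^ 2 : NNReal) : ℝ) * 1 ^ 2 / 2 = (b - a) ^ 2 / 8 := by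
    push_cast
    rw [Real.norm_eq_abs, div_pow, sq_abs]
    ring
  simpa only [one_mul, variance] using hoeffding

lemma two_point_exp_le {p : ℝ} (hp : p ∈ Set.Icc (0 : ℝ) 1) (x y : ℝ) :
    p * Real.exp x + (1 - p) * Real.exp y ≤
      Real.exp (p * x + (1 - p) * y + (x - y) ^ 2 / 8) := by
  have hμ : (fun b => bif b then p else 1 - p) ∈ stdSimplex ℝ Bool :=
    ⟨Bool.forall_bool.2 ⟨sub_nonneg.2 hp.2, hp.1⟩, by simp⟩
  have h := expect_exp_le_of_mem_Icc hμ (f := fun b => bif b then x else y)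
    (a := min x y) (b := max x y) (Bool.forall_bool.2 (by simp))
  simpa [_root_.expect, max_sub_min_eq_abs'] using h

/-- Chernoff's bound. If `v = 0` then the right-hand side is `Real.exp (_ / 0) = 1`. -/
lemma sum_filter_add_lt_le_exp (hμ : μ ∈ stdSimplex ℝ Ω) {v : NNReal}
    (hmgf : ∀ s, expect μ (fun x => Real.exp (s * f x)) ≤
      Real.exp (s * expect μ f + v * s ^ 2 / 2)) {t : ℝ} (ht : 0 ≤ t) :
    ∑ x ∈ univ.filter (fun x => expect μ f + t < f x), μ x ≤ Real.exp (-t ^ 2 / (2 * v)) := by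
  let _ : MeasurableSpace Ω := ⊤
  have subGaussian : ProbabilityTheory.HasSubgaussianMGF (fun x => f x - expect μ f) v
      (simplexPMF hμ).toMeasure :=
    { integrable_exp_mul := fun _ => .of_finite
      mgf_le := fun s => by
        rw [ProbabilityTheory.mgf, integral_simplexPMF, expect_exp_centered, Real.exp_neg,
          inv_mul_le_iff₀ (Real.exp_pos _), ← Real.exp_add]
        exact hmgf s }
  refine le_trans ?_ (subGaussian.measure_ge_le ht)
  rw [← measureReal_simplexPMF hμ]
  refine MeasureTheory.measureReal_mono fun x hx => ?_
  rw [mem_coe, mem_filter_univ] at hx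
  exact (lt_sub_iff_add_lt'.2 hx).le

end SubGaussian

section Fields

variable {ι : Type*} [DecidableEq ι]

/-- Site-dependent external fields, `h i b` being the weight of the spin `b` at `i`. One of the
two weights at a site may vanish: the site is then pinned to the other spin. -/
structure AdmissibleField (h : ι → Bool → ℝ) : Prop where
  nonneg : ∀ i b, 0 ≤ h i b
  exists_pos : ∀ i, ∃ b, 0 < h i b

/-- The sites at which both spins are possible. -/
def freeSites [Fintype ι] (h : ι → Bool → ℝ) : Finset ι :=
  univ.filter fun i => ∀ b, h i b ≠ 0

/-- Replace the field at `i` by one that forces the spin `b`. -/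
def pinField (h : ι → Bool → ℝ) (i : ι) (b : Bool) : ι → Bool → ℝ :=
  Function.update h i (Pi.single b 1)

/-- The factor by which the weight of the spin `b` at a site changes when a neighbouring
spin is flipped from `-1` to `+1`. -/
def tiltFactor (β : ℝ) (b : Bool) : ℝ := if b then β else β⁻¹

/-- The fields felt after flipping, from `-1` to `+1`, a spin whose neighbours are the sites in
`T`. -/
def tiltField (β : ℝ) (T : Finset ι) (h : ι → Bool → ℝ) : ι → Bool → ℝ :=
  T.piecewise (fun i b => tiltFactor β b * h i b) h

variable {h : ι → Bool → ℝ} {β : ℝ}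

lemma AdmissibleField.update (hh : AdmissibleField h) (i : ι) {g : Bool → ℝ}
    (g_nonneg : ∀ b, 0 ≤ g b) (g_pos : ∃ b, 0 < g b) :
    AdmissibleField (Function.update h i g) where
  nonneg := (Function.forall_update_iff h fun _ g => ∀ b, 0 ≤ g b).2
    ⟨g_nonneg, fun j _ => hh.nonneg j⟩
  exists_pos := (Function.forall_update_iff h fun _ g => ∃ b, 0 < g b).2
    ⟨g_pos, fun j _ => hh.exists_pos j⟩

lemma AdmissibleField.pinField (hh : AdmissibleField h) (i : ι) (b : Bool) :
    AdmissibleField (pinField h i b) :=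
  hh.update i (fun c => (Pi.single_nonneg.2 zero_le_one : (0 : Bool → ℝ) ≤ Pi.single b 1) c)
    ⟨b, by rw [Pi.single_eq_same]; exact one_pos⟩

lemma tiltFactor_pos (hβ : 0 < β) (b : Bool) : 0 < tiltFactor β b := by
  unfold tiltFactor
  split_ifs <;> positivity

lemma AdmissibleField.tiltField (hβ : 0 < β) (hh : AdmissibleField h) (T : Finset ι) :
    AdmissibleField (tiltField β T h) where
  nonneg i b := by
    by_cases hi : i ∈ T
    · simpa only [_root_.tiltField, piecewise_eq_of_mem _ _ _ hi] using
        mul_nonneg (tiltFactor_pos hβ b).le (hh.nonneg i b)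
    · simpa only [_root_.tiltField, piecewise_eq_of_notMem _ _ _ hi] using hh.nonneg i b
  exists_pos i := by
    obtain ⟨b, hb⟩ := hh.exists_pos i
    refine ⟨b, ?_⟩
    by_cases hi : i ∈ T
    · simpa only [_root_.tiltField, piecewise_eq_of_mem _ _ _ hi] using
        mul_pos (tiltFactor_pos hβ b) hb
    · simpa only [_root_.tiltField, piecewise_eq_of_notMem _ _ _ hi] using hb

lemma tiltField_insert {T : Finset ι} {i : ι} (hi : i ∉ T) :
    tiltField β (insert i T) h =
      Function.update (tiltField β T h) i fun b => tiltFactor β b * tiltField β T h i b := by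
  simp only [tiltField, piecewise_insert, piecewise_eq_of_notMem _ _ _ hi]

variable [Fintype ι]

omit [DecidableEq ι] in
lemma mem_freeSites {i : ι} : i ∈ freeSites h ↔ ∀ b, h i b ≠ 0 := mem_filter_univ i

lemma freeSites_pinField (h : ι → Bool → ℝ) (i : ι) (b : Bool) :
    freeSites (pinField h i b) = (freeSites h).erase i := by
  ext j
  rw [mem_erase, mem_freeSites, mem_freeSites, pinField]
  obtain rfl | hj := eq_or_ne j i
  · simp only [Function.update_self, ne_eq, not_true, false_and, iff_false, not_forall, not_not]
    exact ⟨!b, Pi.single_eq_of_ne (by simp) _⟩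
  · simp only [Function.update_of_ne hj, ne_eq, hj, not_false_eq_true, true_and]

lemma freeSites_tiltField (hβ : 0 < β) (T : Finset ι) :
    freeSites (tiltField β T h) = freeSites h := by
  ext i
  simp only [mem_freeSites, tiltField, piecewise]
  split_ifs <;> simp [(tiltFactor_pos hβ _).ne']

end Fields

section Gibbs

variable {ι : Type*} [Fintype ι] [DecidableEq ι]

/-- Unnormalized expectation of `f` for the weights `(∏ i, h i (σ i)) * A σ`, where `A` is the
interaction between the sites and `h` the external field. The partition function is
`gibbsSum A h 1`. -/
def gibbsSum (A : (ι → Bool) → ℝ) (h : ι → Bool → ℝ) (f : (ι → Bool) → ℝ) : ℝ :=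
  ∑ σ, (∏ i, h i (σ i)) * A σ * f σ

/-- The Gibbs distribution with interaction `A` and external field `h`. -/
def gibbsDist (A : (ι → Bool) → ℝ) (h : ι → Bool → ℝ) (σ : ι → Bool) : ℝ :=
  (∏ i, h i (σ i)) * A σ / gibbsSum A h 1

/-- Mean of `f` under the Gibbs distribution. -/
def gibbsMean (A : (ι → Bool) → ℝ) (h : ι → Bool → ℝ) (f : (ι → Bool) → ℝ) : ℝ :=
  expect (gibbsDist A h) f

variable {A : (ι → Bool) → ℝ} {h : ι → Bool → ℝ} {f : (ι → Bool) → ℝ}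

lemma gibbsMean_eq_div (A : (ι → Bool) → ℝ) (h : ι → Bool → ℝ) (f : (ι → Bool) → ℝ) :
    gibbsMean A h f = gibbsSum A h f / gibbsSum A h 1 := by
  simp only [gibbsMean, _root_.expect, gibbsDist, div_mul_eq_mul_div]
  rw [← sum_div, ← gibbsSum]

omit [DecidableEq ι] in
lemma prod_field_mul_nonneg (hA : ∀ σ, 0 < A σ) (hh : AdmissibleField h) (σ : ι → Bool) :
    0 ≤ (∏ i, h i (σ i)) * A σ :=
  mul_nonneg (prod_nonneg fun i _ => hh.nonneg i (σ i)) (hA σ).le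

lemma gibbsSum_one_pos (hA : ∀ σ, 0 < A σ) (hh : AdmissibleField h) : 0 < gibbsSum A h 1 := by
  choose τ hτ using hh.exists_pos
  simp only [gibbsSum, Pi.one_apply, mul_one]
  exact sum_pos' (fun σ _ => prod_field_mul_nonneg hA hh σ)
    ⟨τ, mem_univ τ, mul_pos (prod_pos fun i _ => hτ i) (hA τ)⟩

lemma gibbsDist_mem_stdSimplex (hA : ∀ σ, 0 < A σ) (hh : AdmissibleField h) :
    gibbsDist A h ∈ stdSimplex ℝ (ι → Bool) := by
  have hZ := gibbsSum_one_pos hA hh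
  refine ⟨fun σ => div_nonneg (prod_field_mul_nonneg hA hh σ) hZ.le, ?_⟩
  simpa only [gibbsMean, _root_.expect, Pi.one_apply, mul_one, div_self hZ.ne'] using
    gibbsMean_eq_div A h 1

lemma exists_gibbsMean_eq_apply (hA : ∀ σ, 0 < A σ) (hh : AdmissibleField h)
    (hfree : freeSites h = ∅) : ∃ τ, ∀ f, gibbsMean A h f = f τ := by
  choose τ hτ using hh.exists_pos
  have field_eq_zero : ∀ i b, b ≠ τ i → h i b = 0 := by
    intro i b hb
    by_contra hib
    have hi : i ∈ freeSites h := mem_freeSites.2 fun c => by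
      obtain rfl | hc := eq_or_ne c b
      · exact hib
      · rw [Bool.eq_not.2 hc, ← Bool.eq_not.2 hb.symm]
        exact (hτ i).ne'
    rw [hfree] at hi
    exact notMem_empty i hi
  have gibbsSum_eq : ∀ f, gibbsSum A h f = (∏ i, h i (τ i)) * A τ * f τ := fun f =>
    sum_eq_single τ (fun σ _ hσ => by
      obtain ⟨i, hi⟩ := Function.ne_iff.1 hσ
      rw [prod_eq_zero (mem_univ i) (field_eq_zero i _ hi), zero_mul, zero_mul])
      (fun hτ => absurd (mem_univ τ) hτ)
  have weight_ne : (∏ i, h i (τ i)) * A τ ≠ 0 :=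
    (mul_pos (prod_pos fun i _ => hτ i) (hA τ)).ne'
  refine ⟨τ, fun f => ?_⟩
  rw [gibbsMean_eq_div, gibbsSum_eq, gibbsSum_eq, Pi.one_apply, mul_one,
    mul_div_cancel_left₀ _ weight_ne]

/-- The effect on the mean of `f` of flipping a pinned spin at `i`. -/
def spinInfluence (A : (ι → Bool) → ℝ) (h : ι → Bool → ℝ) (i : ι) (f : (ι → Bool) → ℝ) : ℝ :=
  |gibbsMean A (pinField h i true) f - gibbsMean A (pinField h i false) f|

lemma prod_update_field (h : ι → Bool → ℝ) (i : ι) (g : Bool → ℝ) (σ : ι → Bool) :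
    ∏ j, Function.update h i g j (σ j) = g (σ i) * ∏ j ∈ univ \ {i}, h j (σ j) := by
  simp only [Function.apply_update (fun j (k : Bool → ℝ) => k (σ j)) h i g]
  exact prod_update_of_mem (mem_univ i) _ _

lemma gibbsSum_update (A : (ι → Bool) → ℝ) (h : ι → Bool → ℝ) (i : ι) (g : Bool → ℝ)
    (f : (ι → Bool) → ℝ) :
    gibbsSum A (Function.update h i g) f =
      g true * gibbsSum A (pinField h i true) f + g false * gibbsSum A (pinField h i false) f := by
  simp only [gibbsSum, pinField, prod_update_field, mul_sum, ← sum_add_distrib]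
  refine sum_congr rfl fun σ _ => ?_
  cases σ i <;> simp <;> ring

lemma gibbsMean_update (hA : ∀ σ, 0 < A σ) (hh : AdmissibleField h) (i : ι) (g : Bool → ℝ)
    (f : (ι → Bool) → ℝ) :
    gibbsMean A (Function.update h i g) f =
      (g true * gibbsSum A (pinField h i true) 1 * gibbsMean A (pinField h i true) f +
        g false * gibbsSum A (pinField h i false) 1 * gibbsMean A (pinField h i false) f) /
      (g true * gibbsSum A (pinField h i true) 1 +
        g false * gibbsSum A (pinField h i false) 1) := by
  have hZ := fun b => (gibbsSum_one_pos hA (hh.pinField i b)).ne'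
  simp only [gibbsMean_eq_div, gibbsSum_update, mul_assoc, mul_div_cancel₀ _ (hZ _)]

lemma exists_gibbsMean_eq_mix (hA : ∀ σ, 0 < A σ) (hh : AdmissibleField h) (i : ι) :
    ∃ p ∈ Set.Icc (0 : ℝ) 1, ∀ f, gibbsMean A h f =
      p * gibbsMean A (pinField h i true) f + (1 - p) * gibbsMean A (pinField h i false) f := by
  set a := h i true * gibbsSum A (pinField h i true) 1 with a_def
  set b := h i false * gibbsSum A (pinField h i false) 1 with b_def
  have ha : 0 ≤ a := mul_nonneg (hh.nonneg i _) (gibbsSum_one_pos hA (hh.pinField i _)).le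
  have hb : 0 ≤ b := mul_nonneg (hh.nonneg i _) (gibbsSum_one_pos hA (hh.pinField i _)).le
  have hab : 0 < a + b := by
    rw [a_def, b_def, ← gibbsSum_update, Function.update_eq_self]
    exact gibbsSum_one_pos hA hh
  refine ⟨a / (a + b), ⟨by positivity, div_le_one_of_le₀ (by linarith) hab.le⟩, fun f => ?_⟩
  have mean := gibbsMean_update hA hh i (h i) f
  rw [Function.update_eq_self] at mean
  rw [mean, ← a_def, ← b_def]
  field_simp
  ring

/-- Condition on the free spins one at a time: by Hoeffding's lemma for the two values of the
conditional mean, each costs a factor `exp (s ^ 2 * L ^ 2 / 8)`. -/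
lemma gibbsMean_exp_le (hA : ∀ σ, 0 < A σ) {L : ℝ}
    (hL : ∀ h, AdmissibleField h → ∀ i, spinInfluence A h i f ≤ L) (hh : AdmissibleField h)
    (s : ℝ) :
    gibbsMean A h (fun σ => Real.exp (s * f σ)) ≤
      Real.exp (s * gibbsMean A h f + (freeSites h).card * (s ^ 2 * L ^ 2 / 8)) := by
  induction hn : (freeSites h).card generalizing h with
  | zero =>
    obtain ⟨τ, hτ⟩ := exists_gibbsMean_eq_apply hA hh (card_eq_zero.1 hn)
    simp only [hτ, Nat.cast_zero, zero_mul, add_zero, le_refl]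
  | succ n ih =>
    obtain ⟨i, hi⟩ : (freeSites h).Nonempty := card_pos.1 (by omega)
    have ih_pin := fun b => ih (hh.pinField i b) (by
      rw [freeSites_pinField, card_erase_of_mem hi, hn, Nat.add_sub_cancel])
    obtain ⟨p, hp, mean_eq⟩ := exists_gibbsMean_eq_mix hA hh i
    have influence : spinInfluence A h i f ^ 2 ≤ L ^ 2 :=
      pow_le_pow_left₀ (abs_nonneg _) (hL h hh i) 2
    rw [spinInfluence, sq_abs] at influence
    rw [mean_eq, mean_eq f]
    set x := gibbsMean A (pinField h i true) f
    set y := gibbsMean A (pinField h i false) f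
    have variance_le : s ^ 2 * (x - y) ^ 2 / 8 ≤ s ^ 2 * L ^ 2 / 8 := by gcongr
    set v := s ^ 2 * L ^ 2 / 8
    calc _ ≤ p * Real.exp (s * x + n * v) + (1 - p) * Real.exp (s * y + n * v) :=
          add_le_add (mul_le_mul_of_nonneg_left (ih_pin true) hp.1)
            (mul_le_mul_of_nonneg_left (ih_pin false) (sub_nonneg.2 hp.2))
      _ ≤ _ := two_point_exp_le hp _ _
      _ = Real.exp (s * (p * x + (1 - p) * y) + n * v + s ^ 2 * (x - y) ^ 2 / 8) := by ring_nf
      _ ≤ Real.exp (s * (p * x + (1 - p) * y) + n * v + v) := by gcongr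
      _ = _ := by push_cast; ring_nf

end Gibbs

section Tilting

/-- A two-point distribution with masses proportional to `a`, `b` moves by at most
`|β - 1| / (β + 1)` when its odds are multiplied by `β ^ 2`. -/
lemma abs_tilted_average_sub_le {β a b : ℝ} (hβ : 0 < β) (ha : 0 ≤ a) (hb : 0 ≤ b)
    (hab : 0 < a + b) (x y : ℝ) :
    |(β * a * x + β⁻¹ * b * y) / (β * a + β⁻¹ * b) - (a * x + b * y) / (a + b)| ≤
      |β - 1| / (β + 1) * |x - y| := by
  have hD : 0 < β * a + β⁻¹ * b := by
    obtain rfl | ha := ha.eq_or_lt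
    · have : 0 < b := by linarith
      positivity
    · positivity
  have difference : (β * a * x + β⁻¹ * b * y) / (β * a + β⁻¹ * b) - (a * x + b * y) / (a + b) =
      a * b * (β - β⁻¹) / ((β * a + β⁻¹ * b) * (a + b)) * (x - y) := by
    rw [div_sub_div _ _ hD.ne' hab.ne', div_mul_eq_mul_div]
    ring
  have AM_GM : a * b * (β + 1) ^ 2 ≤ β * ((β * a + β⁻¹ * b) * (a + b)) := by
    have : β * ((β * a + β⁻¹ * b) * (a + b)) = (β ^ 2 * a + b) * (a + b) := by field_simp
    nlinarith [sq_nonneg (β * a - b)]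
  have abs_odds : |β - β⁻¹| = |β - 1| * ((β + 1) / β) := by
    rw [← abs_of_pos (show 0 < (β + 1) / β by positivity), ← abs_mul]
    congr 1
    field_simp
    ring
  rw [difference, abs_mul, abs_div, abs_mul, abs_of_nonneg (mul_nonneg ha hb), abs_odds,
    abs_of_pos (mul_pos hD hab)]
  refine mul_le_mul_of_nonneg_right ?_ (abs_nonneg _)
  rw [div_le_div_iff₀ (mul_pos hD hab) (by positivity)]
  calc a * b * (|β - 1| * ((β + 1) / β)) * (β + 1) = |β - 1| * (a * b * (β + 1) ^ 2 / β) := by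
        ring
    _ ≤ |β - 1| * ((β * a + β⁻¹ * b) * (a + b)) := by
        gcongr
        rwa [div_le_iff₀' hβ]

variable {ι : Type*} [Fintype ι] [DecidableEq ι] {A : (ι → Bool) → ℝ} {h : ι → Bool → ℝ}
  {β : ℝ} {f : (ι → Bool) → ℝ}

lemma abs_gibbsMean_tilt_site_sub_le (hA : ∀ σ, 0 < A σ) (hh : AdmissibleField h) (hβ : 0 < β)
    (i : ι) (f : (ι → Bool) → ℝ) :
    |gibbsMean A (Function.update h i fun b => tiltFactor β b * h i b) f - gibbsMean A h f| ≤
      |β - 1| / (β + 1) * spinInfluence A h i f := by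
  have hZ := fun b => (gibbsSum_one_pos hA (hh.pinField i b)).le
  have partition_pos := gibbsSum_one_pos hA hh
  have mean := gibbsMean_update hA hh i (h i) f
  rw [← Function.update_eq_self i h, gibbsSum_update] at partition_pos
  rw [Function.update_eq_self] at mean
  rw [gibbsMean_update hA hh, mean]
  simpa only [tiltFactor, spinInfluence, Bool.false_eq_true, if_true, if_false, mul_assoc] using
    abs_tilted_average_sub_le hβ (mul_nonneg (hh.nonneg i true) (hZ true))
      (mul_nonneg (hh.nonneg i false) (hZ false)) partition_pos
      (gibbsMean A (pinField h i true) f) (gibbsMean A (pinField h i false) f)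

lemma gibbsMean_tilt_site_of_notMem_freeSites (A : (ι → Bool) → ℝ) (hβ : 0 < β)
    {i : ι} (hi : i ∉ freeSites h) (f : (ι → Bool) → ℝ) :
    gibbsMean A (Function.update h i fun b => tiltFactor β b * h i b) f = gibbsMean A h f := by
  obtain ⟨b, hb⟩ : ∃ b, h i b = 0 := by simpa only [mem_freeSites, not_forall, not_not] using hi
  have proportional : (fun c => tiltFactor β c * h i c) = tiltFactor β (!b) • h i := by
    funext c
    obtain rfl | hc := eq_or_ne c b
    · simp only [Pi.smul_apply, hb, mul_zero, smul_zero]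
    · rw [Bool.eq_not.2 hc, Pi.smul_apply, smul_eq_mul]
  have gibbsSum_eq : ∀ f, gibbsSum A (Function.update h i (tiltFactor β (!b) • h i)) f =
      tiltFactor β (!b) * gibbsSum A h f := fun f => by
    conv_rhs => rw [← Function.update_eq_self i h]
    simp only [gibbsSum_update, Pi.smul_apply, smul_eq_mul]
    ring
  rw [proportional, gibbsMean_eq_div, gibbsMean_eq_div, gibbsSum_eq, gibbsSum_eq,
    mul_div_mul_left _ _ (tiltFactor_pos hβ _).ne']

/-- Telescoping over the sites of `T`; tilting a pinned site has no effect. -/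
lemma abs_gibbsMean_tiltField_sub_le (hA : ∀ σ, 0 < A σ) (hβ : 0 < β) (hh : AdmissibleField h)
    (T : Finset ι) {B : ℝ}
    (hB : ∀ i ∈ T ∩ freeSites h, ∀ h', AdmissibleField h' → freeSites h' = freeSites h →
      spinInfluence A h' i f ≤ B) :
    |gibbsMean A (tiltField β T h) f - gibbsMean A h f| ≤
      (T ∩ freeSites h).card * (|β - 1| / (β + 1) * B) := by
  induction T using Finset.induction_on with
  | empty => simp [tiltField]
  | insert i T hi ih =>
    specialize ih fun j hj => hB j (inter_subset_inter_right (subset_insert i T) hj)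
    rw [tiltField_insert hi]
    by_cases hfree : i ∈ freeSites h
    · have tilt_i := (abs_gibbsMean_tilt_site_sub_le hA (hh.tiltField hβ T) hβ i f).trans
        (mul_le_mul_of_nonneg_left
          (hB i (mem_inter.2 ⟨mem_insert_self i T, hfree⟩) _ (hh.tiltField hβ T)
            (freeSites_tiltField hβ T)) (by positivity))
      rw [insert_inter_of_mem hfree,
        card_insert_of_notMem fun hmem => hi (mem_inter.1 hmem).1, Nat.cast_succ, add_one_mul,
        add_comm]
      exact (abs_sub_le _ _ _).trans (add_le_add tilt_i ih)
    · rw [insert_inter_of_notMem hfree, gibbsMean_tilt_site_of_notMem_freeSites A hβ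
        (by rwa [freeSites_tiltField hβ])]
      exact ih

lemma prod_tiltField (β : ℝ) (T : Finset ι) (h : ι → Bool → ℝ) (σ : ι → Bool) :
    ∏ i, tiltField β T h i (σ i) = (∏ i ∈ T, tiltFactor β (σ i)) * ∏ i, h i (σ i) := by
  rw [← Fintype.prod_ite_mem T, ← prod_mul_distrib]
  refine prod_congr rfl fun i _ => ?_
  by_cases hi : i ∈ T
  · rw [tiltField, piecewise_eq_of_mem _ _ _ hi, if_pos hi]
  · rw [tiltField, piecewise_eq_of_notMem _ _ _ hi, if_neg hi, one_mul]

lemma gibbsSum_pinField_true {i : ι} {T : Finset ι}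
    (hflip : ∀ σ, A (Function.update σ i true) =
      A (Function.update σ i false) * ∏ j ∈ T, tiltFactor β (σ j))
    (h : ι → Bool → ℝ) (f : (ι → Bool) → ℝ) :
    gibbsSum A (pinField h i true) f =
      gibbsSum A (tiltField β T (pinField h i false)) fun σ => f (Function.update σ i true) := by
  have flip_involutive : Function.Involutive fun σ : ι → Bool => Function.update σ i (!σ i) :=
    fun σ => by simp
  unfold gibbsSum
  refine Fintype.sum_bijective _ flip_involutive.bijective _ _ fun σ => ?_
  simp only [prod_tiltField, pinField, prod_update_field]
  cases hσ : σ i with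
  | false => simp
  | true =>
    have flip := hflip (Function.update σ i false)
    have update_true : Function.update σ i true = σ := by rw [← hσ, Function.update_eq_self]
    simp only [Function.update_idem, update_true] at flip
    have rest_eq : ∏ j ∈ univ \ {i}, h j (Function.update σ i false j) =
        ∏ j ∈ univ \ {i}, h j (σ j) := prod_congr rfl fun j hj => by
      rw [Function.update_of_ne (by simpa using hj)]
    simp only [Bool.not_true, Function.update_self, Pi.single_eq_same, Function.update_idem,
      update_true, rest_eq, flip]
    ring

end Tilting

section SpinLipschitz

variable {ι : Type*} [DecidableEq ι] {κ : ℝ} {f : (ι → Bool) → ℝ}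

/-- Flipping a single spin changes `f` by at most `κ`. -/
def SpinLipschitz (κ : ℝ) (f : (ι → Bool) → ℝ) : Prop :=
  ∀ σ i, |f (Function.update σ i (!σ i)) - f σ| ≤ κ

lemma SpinLipschitz.nonneg (hf : SpinLipschitz κ f) (i : ι) : 0 ≤ κ :=
  (abs_nonneg _).trans (hf (fun _ => true) i)

lemma SpinLipschitz.abs_update_sub_le (hf : SpinLipschitz κ f) (σ : ι → Bool) (i : ι) (b : Bool) :
    |f (Function.update σ i b) - f σ| ≤ κ := by
  obtain rfl | hb := eq_or_ne b (σ i)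
  · rw [Function.update_eq_self, sub_self, abs_zero]
    exact hf.nonneg i
  · rw [Bool.eq_not.2 hb]
    exact hf σ i

lemma SpinLipschitz.comp_update (hf : SpinLipschitz κ f) (i : ι) (b : Bool) :
    SpinLipschitz κ fun σ => f (Function.update σ i b) := by
  intro σ j
  obtain rfl | hj := eq_or_ne j i
  · simpa only [Function.update_idem, sub_self, abs_zero] using hf.nonneg j
  · have h := hf (Function.update σ i b) j
    rwa [Function.update_of_ne hj, Function.update_comm hj.symm] at h

end SpinLipschitz

section Interaction

/-- The contribution of the ordered pair `(u, w)` to `isingWeight`. -/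
def pairFactor (G : SimpleGraph V) (β : ℝ) (σ : V → Bool) (u w : V) : ℝ :=
  if G.Adj u w ∧ σ u = σ w then Real.sqrt β else 1

omit [Fintype V] [DecidableEq V] in
lemma pairFactor_comm (G : SimpleGraph V) (β : ℝ) (σ : V → Bool) (u w : V) :
    pairFactor G β σ u w = pairFactor G β σ w u :=
  if_congr (and_congr (G.adj_comm u w) eq_comm) rfl rfl

omit [Fintype V] [DecidableEq V] in
lemma pairFactor_self (G : SimpleGraph V) (β : ℝ) (σ : V → Bool) (v : V) :
    pairFactor G β σ v v = 1 :=
  if_neg fun hv => G.irrefl hv.1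

/-- The field-free part of `isingWeight`. -/
def isingInteraction (G : SimpleGraph V) (β : ℝ) (σ : V → Bool) : ℝ :=
  ∏ u, ∏ w, pairFactor G β σ u w

/-- The constant external field of `isingWeight`. -/
def isingField (V : Type*) (lam : ℝ) (_ : V) (b : Bool) : ℝ := if b then lam else 1

omit [Fintype V] [DecidableEq V] in
lemma admissibleField_isingField {lam : ℝ} (hlam : 0 ≤ lam) :
    AdmissibleField (isingField V lam) where
  nonneg _ _ := by
    unfold isingField
    split_ifs
    exacts [hlam, zero_le_one]
  exists_pos _ := ⟨false, by simp [isingField]⟩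

lemma isingModel_eq_gibbsDist (G : SimpleGraph V) (β lam : ℝ) :
    isingModel G β lam = gibbsDist (isingInteraction G β) (isingField V lam) := by
  have weight_eq : ∀ σ, isingWeight G β lam σ =
      (∏ v, isingField V lam v (σ v)) * isingInteraction G β σ := fun σ => by
    simp only [isingWeight, isingInteraction, pairFactor, isingField, prod_ite, prod_const, one_pow,
      mul_one]
  funext σ
  simp only [isingModel, gibbsDist, gibbsSum, weight_eq, Pi.one_apply, mul_one]

omit [DecidableEq V] in
lemma isingInteraction_pos (G : SimpleGraph V) {β : ℝ} (hβ : 0 < β) (σ : V → Bool) :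
    0 < isingInteraction G β σ :=
  prod_pos fun u _ => prod_pos fun w _ => by
    unfold pairFactor
    split_ifs <;> positivity

lemma prod_prod_eq_sq_mul_prod_erase {ι M : Type*} [Fintype ι] [DecidableEq ι] [CommMonoid M]
    (e : ι → ι → M) {v : ι} (symm : ∀ u, e u v = e v u) (diag : e v v = 1) :
    ∏ u, ∏ w, e u w =
      (∏ w, e v w) ^ 2 * ∏ u ∈ univ.erase v, ∏ w ∈ univ.erase v, e u w := by
  have column : ∏ u ∈ univ.erase v, e u v = ∏ w, e v w := by
    simp only [symm, prod_erase univ diag]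
  have row : ∀ u, ∏ w, e u w = e u v * ∏ w ∈ univ.erase v, e u w := fun u =>
    (mul_prod_erase univ (e u) (mem_univ v)).symm
  rw [← mul_prod_erase univ (fun u => ∏ w, e u w) (mem_univ v),
    prod_congr rfl fun u _ => row u, prod_mul_distrib, column, sq, mul_assoc]

lemma isingInteraction_eq_star_mul (G : SimpleGraph V) [DecidableRel G.Adj] {β : ℝ} (hβ : 0 ≤ β)
    (σ : V → Bool) (v : V) :
    isingInteraction G β σ = (∏ w ∈ G.neighborFinset v, if σ v = σ w then β else 1) *
      ∏ u ∈ univ.erase v, ∏ w ∈ univ.erase v, pairFactor G β σ u w := by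
  have star : (∏ w, pairFactor G β σ v w) ^ 2 =
      ∏ w ∈ G.neighborFinset v, if σ v = σ w then β else 1 := by
    rw [← prod_pow, ← Fintype.prod_ite_mem (G.neighborFinset v)]
    refine prod_congr rfl fun w _ => ?_
    simp only [pairFactor, ite_pow, Real.sq_sqrt hβ, one_pow, G.mem_neighborFinset, ite_and]
  rw [isingInteraction, prod_prod_eq_sq_mul_prod_erase _ (pairFactor_comm G β σ · v)
    (pairFactor_self G β σ v), star]

lemma isingInteraction_update_true (G : SimpleGraph V) [DecidableRel G.Adj] {β : ℝ} (hβ : 0 < β)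
    (v : V) (σ : V → Bool) :
    isingInteraction G β (Function.update σ v true) =
      isingInteraction G β (Function.update σ v false) *
        ∏ w ∈ G.neighborFinset v, tiltFactor β (σ w) := by
  have star : ∀ b, (∏ w ∈ G.neighborFinset v,
      if Function.update σ v b v = Function.update σ v b w then β else 1) =
        ∏ w ∈ G.neighborFinset v, if b = σ w then β else 1 := fun b =>
    prod_congr rfl fun w hw => by
      rw [Function.update_self, Function.update_of_ne ((G.mem_neighborFinset v w).1 hw).ne']
  have rest : ∀ b, ∏ u ∈ univ.erase v, ∏ w ∈ univ.erase v,
      pairFactor G β (Function.update σ v b) u w =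
        ∏ u ∈ univ.erase v, ∏ w ∈ univ.erase v, pairFactor G β σ u w := fun b =>
    prod_congr rfl fun u hu => prod_congr rfl fun w hw => by
      rw [pairFactor, Function.update_of_ne (ne_of_mem_erase hu),
        Function.update_of_ne (ne_of_mem_erase hw), ← pairFactor]
  have flip : ∀ b, (if true = b then β else 1) = (if false = b then β else 1) * tiltFactor β b :=
    Bool.forall_bool.2 (by simp [tiltFactor, hβ.ne'])
  rw [isingInteraction_eq_star_mul G hβ.le _ v, isingInteraction_eq_star_mul G hβ.le _ v,
    star, star, rest, rest, prod_congr rfl fun w _ => flip (σ w), prod_mul_distrib, mul_right_comm]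

end Interaction

section Influence

variable {G : SimpleGraph V} [DecidableRel G.Adj] {β κ δ : ℝ} {Δ : ℕ} {h : V → Bool → ℝ} {v : V}
  {f : (V → Bool) → ℝ}

lemma gibbsMean_pinField_true (hβ : 0 < β) (h : V → Bool → ℝ) (v : V) (f : (V → Bool) → ℝ) :
    gibbsMean (isingInteraction G β) (pinField h v true) f =
      gibbsMean (isingInteraction G β) (tiltField β (G.neighborFinset v) (pinField h v false))
        fun σ => f (Function.update σ v true) := by
  rw [gibbsMean_eq_div, gibbsMean_eq_div,
    gibbsSum_pinField_true (isingInteraction_update_true G hβ v) h f,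
    gibbsSum_pinField_true (isingInteraction_update_true G hβ v) h 1]
  rfl

lemma spinInfluence_le_of_neighbors (hβ : 0 < β) (hh : AdmissibleField h)
    (hf : SpinLipschitz κ f) {B : ℝ}
    (hB : ∀ u ∈ G.neighborFinset v, u ∈ (freeSites h).erase v → ∀ h', AdmissibleField h' →
      freeSites h' = (freeSites h).erase v → ∀ g, SpinLipschitz κ g →
      spinInfluence (isingInteraction G β) h' u g ≤ B) :
    spinInfluence (isingInteraction G β) h v f ≤
      κ + (G.neighborFinset v ∩ freeSites h).card * (|β - 1| / (β + 1) * B) := by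
  set A := isingInteraction G β
  set T := G.neighborFinset v
  have hA : ∀ σ, 0 < A σ := isingInteraction_pos G hβ
  have h_pin := hh.pinField v false
  have free_eq : freeSites (pinField h v false) = (freeSites h).erase v := freeSites_pinField ..
  have card_eq : T ∩ (freeSites h).erase v = T ∩ freeSites h := by
    rw [inter_erase, erase_eq_of_notMem]
    exact fun hv => G.irrefl ((G.mem_neighborFinset v v).1 (mem_inter.1 hv).1)
  have field_shift := abs_gibbsMean_tiltField_sub_le (f := fun σ => f (Function.update σ v true))
    hA hβ h_pin T fun u hu h' hh' free_h' => by
      rw [free_eq, mem_inter] at hu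
      exact hB u hu.1 hu.2 h' hh' (free_h'.trans free_eq) _ (hf.comp_update v true)
  have function_shift := abs_expect_sub_expect_le (gibbsDist_mem_stdSimplex hA h_pin)
    fun σ => hf.abs_update_sub_le σ v true
  rw [free_eq, card_eq] at field_shift
  rw [spinInfluence, gibbsMean_pinField_true hβ, add_comm]
  exact (abs_sub_le _ _ _).trans (add_le_add field_shift function_shift)

lemma card_neighborFinset_inter_lt (hdeg : ∀ v, G.degree v ≤ Δ) {u : V}
    (hu : u ∈ G.neighborFinset v) {S : Finset V} (hv : v ∉ S) :
    (G.neighborFinset u ∩ S).card < Δ := by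
  refine (card_lt_card ?_).trans_le (hdeg u)
  refine (ssubset_iff_of_subset inter_subset_left).2 ⟨v, ?_, fun h => hv (mem_inter.1 h).2⟩
  rwa [G.mem_neighborFinset, G.adj_comm, ← G.mem_neighborFinset]

/-- Along the recursion every vertex has its predecessor as a pinned neighbour, hence at most
`Δ - 1` free ones, and `κ / δ` solves `B = κ + (1 - δ) * B`. -/
lemma spinInfluence_le_of_card_lt (hβ : 0 < β) (hδ : 0 < δ) (hdeg : ∀ v, G.degree v ≤ Δ)
    (huniq : ((Δ : ℝ) - 1) * (|β - 1| / (β + 1)) ≤ 1 - δ) (hh : AdmissibleField h)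
    (hf : SpinLipschitz κ f) (hcard : (G.neighborFinset v ∩ freeSites h).card < Δ) :
    spinInfluence (isingInteraction G β) h v f ≤ κ / δ := by
  induction hS : (freeSites h).erase v using Finset.strongInduction generalizing h v f with
  | H S ih =>
    subst hS
    have recursion := spinInfluence_le_of_neighbors hβ hh hf (B := κ / δ)
      fun u hu hu_free h' hh' free_h' g hg => ih _ (by rw [free_h']; exact erase_ssubset hu_free)
        hh' hg (by
          rw [free_h']
          exact card_neighborFinset_inter_lt hdeg hu (notMem_erase v _)) rfl
    have hκ := hf.nonneg v
    have card_le : ((G.neighborFinset v ∩ freeSites h).card : ℝ) ≤ (Δ : ℝ) - 1 :=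
      le_sub_iff_add_le.2 (by exact_mod_cast hcard)
    calc _ ≤ _ := recursion
      _ ≤ κ + ((Δ : ℝ) - 1) * (|β - 1| / (β + 1) * (κ / δ)) := by gcongr
      _ = κ + ((Δ : ℝ) - 1) * (|β - 1| / (β + 1)) * (κ / δ) := by rw [mul_assoc]
      _ ≤ κ + (1 - δ) * (κ / δ) := by gcongr
      _ = κ / δ := by
        field_simp
        ring

lemma spinInfluence_le (hβ : 0 < β) (hδ : 0 < δ) (hdeg : ∀ v, G.degree v ≤ Δ)
    (huniq : ((Δ : ℝ) - 1) * (|β - 1| / (β + 1)) ≤ 1 - δ) (hh : AdmissibleField h)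
    (hf : SpinLipschitz κ f) :
    spinInfluence (isingInteraction G β) h v f ≤ 2 * κ / δ := by
  have recursion := spinInfluence_le_of_neighbors (v := v) hβ hh hf (B := κ / δ)
    fun u hu _ h' hh' free_h' g hg => spinInfluence_le_of_card_lt hβ hδ hdeg huniq hh' hg <| by
      rw [free_h']
      exact card_neighborFinset_inter_lt hdeg hu (notMem_erase v _)
  have hκ := hf.nonneg v
  have card_le : (G.neighborFinset v ∩ freeSites h).card ≤ Δ :=
    (card_le_card inter_subset_left).trans (hdeg v)
  have contraction_le_one : |β - 1| / (β + 1) ≤ 1 :=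
    div_le_one_of_le₀ (abs_le.2 ⟨by linarith, by linarith⟩) (by linarith)
  calc _ ≤ _ := recursion
    _ ≤ κ + Δ * (|β - 1| / (β + 1) * (κ / δ)) := by gcongr
    _ = κ + (((Δ : ℝ) - 1) * (|β - 1| / (β + 1)) + |β - 1| / (β + 1)) * (κ / δ) := by ring
    _ ≤ κ + (1 - δ + 1) * (κ / δ) := by gcongr
    _ = 2 * κ / δ := by
      field_simp
      ring

theorem ising_lipschitz_concentration_general {lam t : ℝ} (hβ : 0 < β) (hδ : 0 < δ)
    (hdeg : ∀ v, G.degree v ≤ Δ) (huniq : ((Δ : ℝ) - 1) * (|β - 1| / (β + 1)) ≤ 1 - δ)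
    (hlam : 0 ≤ lam) (hκ : 0 < κ) (hf : SpinLipschitz κ f) (ht : 0 ≤ t) :
    ∑ σ ∈ univ.filter (fun σ => expect (isingModel G β lam) f + t < f σ), isingModel G β lam σ ≤
      Real.exp (-(δ ^ 2 / 2 * t ^ 2) / (κ ^ 2 * Fintype.card V)) := by
  have hA := isingInteraction_pos G hβ
  have hh := admissibleField_isingField (V := V) hlam
  lift κ to NNReal using hκ.le
  lift δ to NNReal using hδ.le
  rw [isingModel_eq_gibbsDist]
  refine (sum_filter_add_lt_le_exp (v := κ ^ 2 * Fintype.card V / δ ^ 2)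
    (gibbsDist_mem_stdSimplex hA hh) (fun s => ?_) ht).trans_eq ?_
  · refine (gibbsMean_exp_le hA (fun _ hh' _ => spinInfluence_le hβ hδ hdeg huniq hh' hf) hh
      s).trans (Real.exp_le_exp.2 (add_le_add_right ?_ _))
    calc _ ≤ (Fintype.card V : ℝ) * (s ^ 2 * (2 * κ / δ) ^ 2 / 8) := by
          gcongr
          exact card_le_univ _
      _ = _ := by
        push_cast
        ring
  · congr 1
    push_cast
    field_simp

end Influence

lemma pos_and_contraction_le_of_mem_Icc {d δ β : ℝ} (h_num : 0 < d - 2 + δ) (h_den : 0 < d - δ)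
    (hβ : β ∈ Set.Icc ((d - 2 + δ) / (d - δ)) ((d - δ) / (d - 2 + δ))) :
    0 < β ∧ (d - 1) * (|β - 1| / (β + 1)) ≤ 1 - δ := by
  obtain ⟨lower, upper⟩ := hβ
  have hβ : 0 < β := (div_pos h_num h_den).trans_le lower
  refine ⟨hβ, ?_⟩
  rw [div_le_iff₀ h_den] at lower
  rw [le_div_iff₀ h_num] at upper
  rw [← mul_div_assoc, div_le_iff₀ (by positivity)]
  obtain ⟨h_abs, _⟩ | ⟨h_abs, _⟩ := abs_cases (β - 1) <;> rw [h_abs] <;> linarith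

/-- Sub-Gaussian concentration of Lipschitz functions for the
`δ`-unique Ising model. -/
theorem ising_lipschitz_concentration :
    ∀ δ : ℝ, δ ∈ Set.Ioo (0 : ℝ) 1 →
    ∃ c : ℝ, 0 < c ∧
      ∀ (V : Type) [Fintype V] [DecidableEq V] (G : SimpleGraph V)
        [DecidableRel G.Adj] (Δ : ℕ), 3 ≤ Δ →
        (∀ v : V, G.degree v ≤ Δ) →
        ∀ β lam : ℝ,
          ((Δ : ℝ) - 2 + δ) / ((Δ : ℝ) - δ) ≤ β →
          β ≤ ((Δ : ℝ) - δ) / ((Δ : ℝ) - 2 + δ) →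
          0 < lam →
          ∀ (κ : ℝ) (f : (V → Bool) → ℝ), 0 < κ →
            (∀ (σ : V → Bool) (v : V), |f (Function.update σ v (!σ v)) - f σ| ≤ κ) →
            ∀ t : ℝ, 0 ≤ t →
              ∑ σ ∈ univ.filter
                  (fun σ : V → Bool =>
                    expect (isingModel G β lam) f + t < f σ),
                  isingModel G β lam σ ≤
                Real.exp (-(c * t ^ 2) / (κ ^ 2 * Fintype.card V)) := by
  rintro δ ⟨hδ, hδ_lt⟩
  refine ⟨δ ^ 2 / 2, by positivity, ?_⟩
  intro V _ _ G _ Δ hΔ hdeg β lam lower upper hlam κ f hκ hf t ht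
  have hΔ' : (3 : ℝ) ≤ Δ := by exact_mod_cast hΔ
  obtain ⟨hβ, huniq⟩ :=
    pos_and_contraction_le_of_mem_Icc (by linarith) (by linarith) ⟨lower, upper⟩
  exact ising_lipschitz_concentration_general hβ hδ hdeg huniq hlam.le hκ hf ht
end
end

section
/- Let 0 < β ≤ γ with β·γ < 1, let δ ∈ (0,1), and set \bar{Δ} = (1+√(βγ))/(1−√(βγ)). Let d ≥ 1 be an integer with d ≥ (1−δ)·\bar{Δ}, and define ζ = d(1−βγ) − (1−δ)(1+βγ), x = (ζ − √(ζ² − 4(1−δ)²βγ))/(2(1−δ)β), and λ₁ = x·((x+γ)/(βx+1))^d. Then: (a) (1−δ)·γ^{d+1}/ζ ≤ λ₁ ≤ (2(1−δ)·γ^{d+1}/ζ)·((d+1−δ)/(d−1+δ))^d; (b) if in addition d ≥ 2, then λ₁ ≤ 9·γ^{d+1}/√(βγ); and (c) if in addition d ≥ 2 and β·γ ≥ Δ/(Δ+α) for some real α > 0 and some integer Δ ≥ d+1, then (1−δ)/(α·e^{α}) ≤ β^{d+1}·λ₁ ≤ λ₁/γ^{d+1} ≤ 9·√(1+α). -/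
/-!
Put `c = 1 - δ`. The point `x` is the smaller root of `c β x² - ζ x + c γ = 0`. The product of the
roots is `γ / β`, so `β x² ≤ γ`, and `ζ x = c (β x² + γ)` gives `c γ / ζ ≤ x ≤ 2 c γ / ζ`.
Substituting the definition of `ζ`, the same equation reads
`d (1 - βγ) x = c (β x + 1) (x + γ)`, which together with `β x² ≤ γ` yields
`γ ≤ (x + γ) / (β x + 1) ≤ γ (d + c) / (d - c)`. This is (a).

For (b), `β x² ≤ γ` also says `x ≤ γ / √(βγ)`, while `log ((d + c) / (d - c)) = 2 artanh (c / d)`.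
All coefficients of the power series of `artanh` are nonnegative and its constant term vanishes, so
`artanh (c / d) ≤ (2 c / d) artanh (1 / 2)`, that is, `((d + c) / (d - c)) ^ d ≤ 3 ^ (2 c) = 9 ^ c`.

In (c), the lower bound on `βγ` gives `ζ ≤ d (1 - βγ) ≤ α`, `(βγ) ^ (d + 1) ≥ exp (-α)` and
`1 / (βγ) ≤ 1 + α`.
-/

open Real

/-- The external field `λ` for which `x` is a fixed point of the tree recursion
`y ↦ λ * ((β * y + 1) / (y + γ)) ^ d`. -/
noncomputable def fixedPointField (β γ : ℝ) (d : ℕ) (x : ℝ) : ℝ :=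
  x * ((x + γ) / (β * x + 1)) ^ d

/-- The quantity `ζ`: at the field that fixes `x`, the recursion has derivative `-c` at `x` exactly
when `c * β * x ^ 2 - ζ * x + c * γ = 0`. -/
def criticalCoeff (β γ c d : ℝ) : ℝ :=
  d * (1 - β * γ) - c * (1 + β * γ)

/-- `x` is the lower critical point for the slope `c`: at the external field that fixes `x`, the
tree recursion with `d` children has derivative `-c` at `x` (this is `slope_eq`), and `x` is the
smaller of the two positive points with this property. Minimality is encoded by `mul_sq_le`, since
the product of the two points is `γ / β`. -/
structure IsLowerCriticalPoint (β γ c d x : ℝ) : Prop where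
  pos : 0 < x
  slope_eq : d * (1 - β * γ) * x = c * (β * x + 1) * (x + γ)
  mul_sq_le : β * x ^ 2 ≤ γ

lemma smaller_quadratic_root {a p r x : ℝ} (ha : 0 < a) (hp : 0 < p) (hr : 0 < r)
    (hdisc : 4 * a * r ≤ p ^ 2) (hx : x = (p - √(p ^ 2 - 4 * a * r)) / (2 * a)) :
    0 < x ∧ a * x ^ 2 ≤ r ∧ p * x = a * x ^ 2 + r := by
  have hroot : a * (x * x) + -p * x + r = 0 := by
    refine (quadratic_eq_zero_iff (s := √(p ^ 2 - 4 * a * r)) ha.ne' ?_ x).2 (.inr ?_)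
    · rw [mul_self_sqrt (sub_nonneg.2 hdisc), discrim, neg_sq]
    · rw [hx, neg_neg]
  have hsqrt : √(p ^ 2 - 4 * a * r) < p :=
    (sqrt_lt' hp).2 (sub_lt_self _ (by positivity))
  have hpos : 0 < x := hx ▸ div_pos (sub_pos.2 hsqrt) (by positivity)
  have hvertex : x * (2 * a) ≤ p := by
    rw [hx, div_mul_cancel₀ _ (by positivity)]
    exact sub_le_self _ (sqrt_nonneg _)
  have hpx := mul_le_mul_of_nonneg_right hvertex hpos.le
  exact ⟨hpos, by linarith, by linarith⟩

lemma two_mul_mul_le_of_mul_div_le {c d s : ℝ} (hs : -1 ≤ s) (hs1 : s < 1)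
    (h : c * ((1 + s) / (1 - s)) ≤ d) :
    2 * c * s ≤ d * (1 - s ^ 2) - c * (1 + s ^ 2) := by
  rw [← mul_div_assoc, div_le_iff₀ (sub_pos.2 hs1)] at h
  have := mul_le_mul_of_nonneg_right h (neg_le_iff_add_nonneg'.1 hs)
  linarith

lemma artanh_mul_le {r y : ℝ} (hr : 0 ≤ r) (hr1 : r ≤ 1) (hy : 0 ≤ y) (hy1 : y < 1) :
    artanh (r * y) ≤ r * artanh y := by
  have hry : r * y ≤ y := mul_le_of_le_one_left hy hr1
  have hry0 : 0 ≤ r * y := mul_nonneg hr hy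
  have hasSum_artanh {z : ℝ} (hz : 0 ≤ z) (hz1 : z < 1) :
      HasSum (fun k : ℕ ↦ 2 * (1 / (2 * k + 1)) * z ^ (2 * k + 1)) (2 * artanh z) := by
    rw [artanh_eq_half_log ⟨by linarith, hz1.le⟩, log_div (by linarith) (by linarith)]
    convert hasSum_log_sub_log_of_abs_lt_one (abs_lt.2 ⟨by linarith, hz1⟩) using 1
    ring
  have hterm (k : ℕ) : 2 * (1 / (2 * (k : ℝ) + 1)) * (r * y) ^ (2 * k + 1) ≤
      r * (2 * (1 / (2 * (k : ℝ) + 1)) * y ^ (2 * k + 1)) := by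
    rw [mul_pow, mul_left_comm r]
    gcongr
    exact pow_le_of_le_one hr hr1 (by omega)
  have := hasSum_le hterm (hasSum_artanh hry0 (by linarith)) ((hasSum_artanh hy hy1).mul_left r)
  linarith

lemma add_div_sub_pow_le_nine_rpow {c : ℝ} {d : ℕ} (hc : 0 ≤ c) (hd : 0 < d)
    (hcd : 2 * c ≤ d) : (((d : ℝ) + c) / (d - c)) ^ d ≤ 9 ^ c := by
  have hd0 : (0 : ℝ) < d := by exact_mod_cast hd
  have hsub : 0 < (d : ℝ) - c := by linarith
  have hmobius : ((d : ℝ) + c) / (d - c) = (1 + c / d) / (1 - c / d) := by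
    field_simp
  have hcd1 : c / d ≤ 1 := (div_le_one hd0).2 (by linarith)
  have hcd0 : 0 ≤ c / d := by positivity
  have hhalf : artanh (1 / 2) = 1 / 2 * log 3 := by
    rw [artanh_eq_half_log (by norm_num)]
    norm_num
  have hartanh : artanh (c / d) ≤ 2 * c / d * artanh (1 / 2) := by
    convert artanh_mul_le (r := 2 * c / d) (y := 1 / 2) (by positivity)
      ((div_le_one hd0).2 hcd) (by norm_num) (by norm_num) using 2
    ring
  have hlog : d * log ((d + c) / (d - c)) ≤ log 9 * c := by
    rw [artanh_eq_half_log ⟨by linarith, hcd1⟩, ← hmobius, hhalf] at hartanh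
    calc d * log ((d + c) / (d - c)) ≤ d * (2 * c / d * log 3) := by gcongr; linarith
      _ = 2 * log 3 * c := by field_simp
      _ = log 9 * c := by rw [show (9 : ℝ) = 3 ^ 2 by norm_num, log_pow, Nat.cast_ofNat]
  rw [rpow_def_of_pos (by norm_num), ← log_le_iff_le_exp (by positivity), log_pow]
  exact hlog

lemma div_add_le_div_add_of_le {α m n : ℝ} (hα : 0 ≤ α) (hm : 0 < m) (hmn : m ≤ n) :
    m / (m + α) ≤ n / (n + α) := by
  rw [div_le_div_iff₀ (by linarith) (by linarith)]
  linarith [mul_le_mul_of_nonneg_right hmn hα]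

lemma mul_one_sub_le_of_div_add_le {α n b : ℝ} (hα : 0 ≤ α) (hn : 0 < n) (hb : b ≤ 1)
    (h : n / (n + α) ≤ b) : n * (1 - b) ≤ α := by
  rw [div_le_iff₀ (by positivity)] at h
  linarith [mul_le_of_le_one_left hα hb]

lemma exp_neg_le_pow_of_div_add_le {α b : ℝ} {n : ℕ} (hα : 0 ≤ α) (hn : 0 < n)
    (h : (n : ℝ) / (n + α) ≤ b) : exp (-α) ≤ b ^ n := by
  have hn0 : (0 : ℝ) < n := by exact_mod_cast hn
  have hexp : (1 + α / n) ^ n ≤ exp α := by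
    simpa only [neg_div, sub_neg_eq_add, neg_neg] using
      one_sub_div_pow_le_exp_neg (n := n) (t := -α) (by linarith)
  calc exp (-α) = (exp α)⁻¹ := exp_neg α
    _ ≤ ((1 + α / n) ^ n)⁻¹ := by gcongr
    _ = (n / (n + α)) ^ n := by rw [← inv_pow, one_add_div hn0.ne', inv_div]
    _ ≤ b ^ n := by gcongr

lemma lt_of_criticalCoeff_pos {β γ c d : ℝ} (hβγ : 0 ≤ β * γ) (hβγ1 : β * γ < 1) (hc : 0 ≤ c)
    (hζ : 0 < criticalCoeff β γ c d) : c < d := by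
  refine lt_of_mul_lt_mul_right ?_ (sub_pos.2 hβγ1).le
  rw [criticalCoeff] at hζ
  linarith [mul_nonneg hc hβγ]

namespace IsLowerCriticalPoint

section Point

variable {β γ c d x ζ : ℝ}

lemma of_eq_sub_sqrt_div (hβ : 0 < β) (hγ : 0 < γ) (hc : 0 < c) (hζ : ζ = criticalCoeff β γ c d)
    (hsqrt : 2 * c * √(β * γ) ≤ ζ)
    (hx : x = (ζ - √(ζ ^ 2 - 4 * c ^ 2 * (β * γ))) / (2 * c * β)) :
    IsLowerCriticalPoint β γ c d x := by
  have hζ0 : 0 < ζ := lt_of_lt_of_le (by positivity) hsqrt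
  have hdisc : 4 * (c * β) * (c * γ) ≤ ζ ^ 2 := by
    calc 4 * (c * β) * (c * γ) = (2 * c * √(β * γ)) ^ 2 := by
          rw [mul_pow, sq_sqrt (by positivity)]
          ring
      _ ≤ ζ ^ 2 := by gcongr
  obtain ⟨hpos, hsq, hroot⟩ := smaller_quadratic_root (x := x) (mul_pos hc hβ) hζ0 (mul_pos hc hγ)
    hdisc (by rw [hx]; ring_nf)
  refine ⟨hpos, ?_, le_of_mul_le_mul_left (by linarith) hc⟩
  rw [hζ, criticalCoeff] at hroot
  linarith

lemma criticalCoeff_mul (h : IsLowerCriticalPoint β γ c d x) :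
    criticalCoeff β γ c d * x = c * (β * x ^ 2 + γ) := by
  rw [criticalCoeff]
  linarith [h.slope_eq]

lemma div_criticalCoeff_le (h : IsLowerCriticalPoint β γ c d x) (hβ : 0 ≤ β) (hc : 0 ≤ c)
    (hζ : 0 < criticalCoeff β γ c d) :
    c * γ / criticalCoeff β γ c d ≤ x := by
  rw [div_le_iff₀' hζ, h.criticalCoeff_mul]
  gcongr
  exact le_add_of_nonneg_left (by positivity)

lemma le_div_criticalCoeff (h : IsLowerCriticalPoint β γ c d x) (hc : 0 ≤ c)
    (hζ : 0 < criticalCoeff β γ c d) :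
    x ≤ 2 * c * γ / criticalCoeff β γ c d := by
  rw [le_div_iff₀' hζ, h.criticalCoeff_mul]
  linarith [mul_le_mul_of_nonneg_left h.mul_sq_le hc]

lemma le_div_sqrt (h : IsLowerCriticalPoint β γ c d x) (hβ : 0 < β) (hγ : 0 < γ) :
    x ≤ γ / √(β * γ) := by
  rw [le_div_iff₀ (by positivity)]
  refine le_of_sq_le_sq ?_ hγ.le
  rw [mul_pow, sq_sqrt (by positivity)]
  linarith [mul_le_mul_of_nonneg_right h.mul_sq_le hγ.le]

lemma le_ratio (h : IsLowerCriticalPoint β γ c d x) (hβ : 0 ≤ β) (hβγ : β * γ ≤ 1) :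
    γ ≤ (x + γ) / (β * x + 1) := by
  have hx := h.pos
  rw [le_div_iff₀ (by positivity)]
  linarith [mul_le_mul_of_nonneg_right hβγ hx.le]

lemma ratio_le (h : IsLowerCriticalPoint β γ c d x) (hβ : 0 ≤ β) (hc : 0 ≤ c) (hcd : c < d) :
    (x + γ) / (β * x + 1) ≤ γ * ((d + c) / (d - c)) := by
  have hx := h.pos
  rw [← mul_div_assoc, div_le_div_iff₀ (by positivity) (sub_pos.2 hcd)]
  linarith [h.slope_eq, mul_le_mul_of_nonneg_left h.mul_sq_le hc]

end Point

section Field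

variable {β γ c x α : ℝ} {d : ℕ}

lemma field_le (h : IsLowerCriticalPoint β γ c d x) (hβ : 0 < β) (hγ : 0 < γ) (hc : 0 ≤ c)
    (hcd : c < d) : fixedPointField β γ d x ≤ x * γ ^ d * ((d + c) / (d - c)) ^ d := by
  have hx := h.pos
  rw [fixedPointField, mul_assoc, ← mul_pow]
  gcongr
  exact h.ratio_le hβ.le hc hcd

lemma div_le_field (h : IsLowerCriticalPoint β γ c d x) (hβ : 0 ≤ β) (hγ : 0 ≤ γ)
    (hβγ : β * γ ≤ 1) (hc : 0 ≤ c) (hζ : 0 < criticalCoeff β γ c d) :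
    c * γ ^ (d + 1) / criticalCoeff β γ c d ≤ fixedPointField β γ d x := by
  calc c * γ ^ (d + 1) / criticalCoeff β γ c d
      = c * γ / criticalCoeff β γ c d * γ ^ d := by ring
    _ ≤ x * ((x + γ) / (β * x + 1)) ^ d := by
      have hx := h.pos
      gcongr
      · exact h.div_criticalCoeff_le hβ hc hζ
      · exact h.le_ratio hβ hβγ

lemma field_le_div_mul (h : IsLowerCriticalPoint β γ c d x) (hβ : 0 < β) (hγ : 0 < γ)
    (hc : 0 ≤ c) (hcd : c < d) (hζ : 0 < criticalCoeff β γ c d) :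
    fixedPointField β γ d x ≤ 2 * c * γ ^ (d + 1) / criticalCoeff β γ c d *
      ((d + c) / (d - c)) ^ d := by
  have : 0 ≤ ((d : ℝ) + c) / (d - c) := div_nonneg (by linarith) (by linarith)
  calc fixedPointField β γ d x ≤ x * γ ^ d * ((d + c) / (d - c)) ^ d := h.field_le hβ hγ hc hcd
    _ ≤ 2 * c * γ / criticalCoeff β γ c d * γ ^ d * ((d + c) / (d - c)) ^ d := by
      gcongr
      exact h.le_div_criticalCoeff hc hζ
    _ = _ := by ring

lemma field_le_nine_rpow_mul (h : IsLowerCriticalPoint β γ c d x) (hβ : 0 < β) (hγ : 0 < γ)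
    (hc : 0 < c) (hcd : 2 * c ≤ d) :
    fixedPointField β γ d x ≤ 9 ^ c * γ ^ (d + 1) / √(β * γ) := by
  have hd : 0 < d := by
    have : (0 : ℝ) < d := by linarith
    exact_mod_cast this
  calc fixedPointField β γ d x ≤ x * γ ^ d * ((d + c) / (d - c)) ^ d :=
        h.field_le hβ hγ hc.le (by linarith)
    _ ≤ γ / √(β * γ) * γ ^ d * 9 ^ c := by
      gcongr
      · have : 0 ≤ ((d : ℝ) + c) / (d - c) := div_nonneg (by linarith) (by linarith)
        positivity
      · exact h.le_div_sqrt hβ hγ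
      · exact add_div_sub_pow_le_nine_rpow hc.le hd hcd
    _ = 9 ^ c * γ ^ (d + 1) / √(β * γ) := by ring

lemma div_mul_exp_le_pow_mul_field (h : IsLowerCriticalPoint β γ c d x) (hβ : 0 < β) (hγ : 0 < γ)
    (hβγ : β * γ ≤ 1) (hc : 0 ≤ c) (hα : 0 ≤ α) (hζ : 0 < criticalCoeff β γ c d)
    (hαd : ((d : ℝ) + 1) / (d + 1 + α) ≤ β * γ) :
    c / (α * exp α) ≤ β ^ (d + 1) * fixedPointField β γ d x := by
  have hζα : criticalCoeff β γ c d ≤ α := by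
    have hle := mul_one_sub_le_of_div_add_le hα (by positivity) hβγ hαd
    have : 0 ≤ c * (1 + β * γ) := by positivity
    rw [criticalCoeff]
    linarith
  have hexp : exp (-α) ≤ (β * γ) ^ (d + 1) :=
    exp_neg_le_pow_of_div_add_le hα d.succ_pos (by exact_mod_cast hαd)
  calc c / (α * exp α) = exp (-α) * (c / α) := by rw [exp_neg]; field_simp
    _ ≤ (β * γ) ^ (d + 1) * (c / criticalCoeff β γ c d) := by gcongr
    _ = β ^ (d + 1) * (c * γ ^ (d + 1) / criticalCoeff β γ c d) := by ring
    _ ≤ β ^ (d + 1) * fixedPointField β γ d x := by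
      gcongr
      exact h.div_le_field hβ.le hγ.le hβγ hc hζ

lemma pow_mul_field_le_field_div_pow (h : IsLowerCriticalPoint β γ c d x) (hβ : 0 ≤ β)
    (hγ : 0 < γ) (hβγ : β * γ ≤ 1) :
    β ^ (d + 1) * fixedPointField β γ d x ≤ fixedPointField β γ d x / γ ^ (d + 1) := by
  have hx := h.pos
  have hfield : 0 ≤ fixedPointField β γ d x := by
    unfold fixedPointField
    positivity
  rw [le_div_iff₀ (by positivity)]
  calc β ^ (d + 1) * fixedPointField β γ d x * γ ^ (d + 1)
      = (β * γ) ^ (d + 1) * fixedPointField β γ d x := by ring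
    _ ≤ fixedPointField β γ d x :=
      mul_le_of_le_one_left hfield (pow_le_one₀ (by positivity) hβγ)

lemma field_div_pow_le (h : IsLowerCriticalPoint β γ c d x) (hβ : 0 < β) (hγ : 0 < γ)
    (hc : 0 < c) (hcd : 2 * c ≤ d) (hα : 0 ≤ α)
    (hαd : ((d : ℝ) + 1) / (d + 1 + α) ≤ β * γ) :
    fixedPointField β γ d x / γ ^ (d + 1) ≤ 9 ^ c * √(1 + α) := by
  have hinv : 1 / (1 + α) ≤ β * γ :=
    (div_add_le_div_add_of_le hα one_pos (by linarith)).trans hαd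
  calc fixedPointField β γ d x / γ ^ (d + 1)
      ≤ 9 ^ c * γ ^ (d + 1) / √(β * γ) / γ ^ (d + 1) := by
        gcongr
        exact h.field_le_nine_rpow_mul hβ hγ hc hcd
    _ = 9 ^ c * √(β * γ)⁻¹ := by
      rw [sqrt_inv]
      field_simp
    _ ≤ 9 ^ c * √(1 + α) := by
      gcongr
      exact (inv_le_comm₀ (by positivity) (by positivity)).2 (by rwa [← one_div])

end Field

end IsLowerCriticalPoint

theorem critical_field_bounds_general (β γ δ : ℝ) (d : ℕ)
    (hβ : 0 < β) (hγ : 0 < γ) (hprod : β * γ < 1) (hδ : δ < 1)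
    (hdbar : (1 - δ) * ((1 + √(β * γ)) / (1 - √(β * γ))) ≤ (d : ℝ))
    (ζ x lam₁ : ℝ)
    (hζ : ζ = (d : ℝ) * (1 - β * γ) - (1 - δ) * (1 + β * γ))
    (hx : x = (ζ - √(ζ ^ 2 - 4 * (1 - δ) ^ 2 * (β * γ))) / (2 * (1 - δ) * β))
    (hlam : lam₁ = x * ((x + γ) / (β * x + 1)) ^ d) :
    ((1 - δ) * γ ^ (d + 1) / ζ ≤ lam₁ ∧
      lam₁ ≤ 2 * (1 - δ) * γ ^ (d + 1) / ζ *
        (((d : ℝ) + 1 - δ) / ((d : ℝ) - 1 + δ)) ^ d) ∧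
    (2 * (1 - δ) ≤ d → lam₁ ≤ 9 ^ (1 - δ) * γ ^ (d + 1) / √(β * γ)) ∧
    (∀ α Δ : ℝ, 0 < α → d + 1 ≤ Δ → Δ / (Δ + α) ≤ β * γ →
      (1 - δ) / (α * exp α) ≤ β ^ (d + 1) * lam₁ ∧
      β ^ (d + 1) * lam₁ ≤ lam₁ / γ ^ (d + 1) ∧
      (2 * (1 - δ) ≤ d → lam₁ / γ ^ (d + 1) ≤ 9 ^ (1 - δ) * √(1 + α))) := by
  have hc : 0 < 1 - δ := sub_pos.2 hδ
  have hζ_sqrt : 2 * (1 - δ) * √(β * γ) ≤ ζ := by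
    simpa only [hζ, sq_sqrt (mul_pos hβ hγ).le] using two_mul_mul_le_of_mul_div_le
      (by linarith [sqrt_nonneg (β * γ)]) ((sqrt_lt' one_pos).2 (by rwa [one_pow])) hdbar
  have hcrit : IsLowerCriticalPoint β γ (1 - δ) d x := .of_eq_sub_sqrt_div hβ hγ hc hζ hζ_sqrt hx
  have hζ_pos : 0 < ζ := lt_of_lt_of_le (by positivity) hζ_sqrt
  obtain rfl : lam₁ = fixedPointField β γ d x := hlam
  obtain rfl : ζ = criticalCoeff β γ (1 - δ) d := hζ
  have hcd : 1 - δ < d := lt_of_criticalCoeff_pos (mul_pos hβ hγ).le hprod hc.le hζ_pos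
  refine ⟨⟨hcrit.div_le_field hβ.le hγ.le hprod.le hc.le hζ_pos, ?_⟩,
    hcrit.field_le_nine_rpow_mul hβ hγ hc, fun α Δ hα hΔ hαΔ ↦ ?_⟩
  · rw [add_sub_assoc, sub_add]
    exact hcrit.field_le_div_mul hβ hγ hc.le hcd hζ_pos
  · have hαd := (div_add_le_div_add_of_le hα.le (by positivity) hΔ).trans hαΔ
    exact ⟨hcrit.div_mul_exp_le_pow_mul_field hβ hγ hprod.le hc.le hα.le hζ_pos hαd,
      hcrit.pow_mul_field_le_field_div_pow hβ.le hγ hprod.le,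
      fun hcd2 ↦ hcrit.field_div_pow_le hβ hγ hc hcd2 hα.le hαd⟩

/-- Bounds on the critical external field `λ₁ = λ_{1,δ}(d)` for
antiferromagnetic two-spin systems with gap-`δ` uniqueness. -/
theorem critical_field_bounds (β γ δ : ℝ) (d : ℕ)
    (hβ : 0 < β) (hβγ : β ≤ γ) (hprod : β * γ < 1)
    (hδ : δ ∈ Set.Ioo (0 : ℝ) 1) (hd : 1 ≤ d)
    (hdbar : (1 - δ) * ((1 + Real.sqrt (β * γ)) / (1 - Real.sqrt (β * γ))) ≤ (d : ℝ))
    (ζ x lam₁ : ℝ)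
    (hζ : ζ = (d : ℝ) * (1 - β * γ) - (1 - δ) * (1 + β * γ))
    (hx : x = (ζ - Real.sqrt (ζ ^ 2 - 4 * (1 - δ) ^ 2 * (β * γ))) / (2 * (1 - δ) * β))
    (hlam : lam₁ = x * ((x + γ) / (β * x + 1)) ^ d) :
    ((1 - δ) * γ ^ (d + 1) / ζ ≤ lam₁ ∧
      lam₁ ≤ 2 * (1 - δ) * γ ^ (d + 1) / ζ *
        (((d : ℝ) + 1 - δ) / ((d : ℝ) - 1 + δ)) ^ d) ∧
    (2 ≤ d → lam₁ ≤ 9 * γ ^ (d + 1) / Real.sqrt (β * γ)) ∧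
    (∀ (α : ℝ) (Δ : ℕ), 0 < α → d + 1 ≤ Δ → (Δ : ℝ) / ((Δ : ℝ) + α) ≤ β * γ →
      2 ≤ d →
      (1 - δ) / (α * Real.exp α) ≤ β ^ (d + 1) * lam₁ ∧
      β ^ (d + 1) * lam₁ ≤ lam₁ / γ ^ (d + 1) ∧
      lam₁ / γ ^ (d + 1) ≤ 9 * Real.sqrt (1 + α)) := by
  obtain ⟨hfield, hnine, hlarge⟩ := critical_field_bounds_general β γ δ d hβ (hβ.trans_le hβγ)
    hprod hδ.2 hdbar ζ x lam₁ hζ hx hlam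
  have hrpow : (9 : ℝ) ^ (1 - δ) ≤ 9 :=
    Real.rpow_le_self_of_one_le (by norm_num) (by linarith [hδ.1])
  have htwo (h2 : 2 ≤ d) : 2 * (1 - δ) ≤ d := by
    linarith [hδ.1, show (2 : ℝ) ≤ d by exact_mod_cast h2]
  have hγ : 0 < γ := hβ.trans_le hβγ
  refine ⟨hfield, fun h2 ↦ (hnine (htwo h2)).trans (by gcongr), fun α Δ hα hΔ hαΔ h2 ↦ ?_⟩
  obtain ⟨hlow, hmid, hhigh⟩ := hlarge α Δ hα (by exact_mod_cast hΔ) hαΔ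
  exact ⟨hlow, hmid, (hhigh (htwo h2)).trans (by gcongr)⟩
end

section
/- Let G = (V,E) be a finite simple graph, let β > 0 and 0 < λ ≤ 1, and let μ be the Ising model on G with edge activity β and external field λ. Let R ∈ ℝ^{V×V} be the Dobrushin matrix of μ. Then for distinct i, j ∈ V: if i and j are not adjacent in G then R_{ij} = 0, and if i and j are adjacent then R_{ij} ≤ λ·|β² − 1|·max(β^{Δ_i − 2}, β^{−Δ_i}), where Δ_i is the degree of i in G. -/
/-!
The conditional law of the spin at `i` sees only the neighbours of `i`: if `p` of them are plus and
`m` are minus, the conditional odds of a plus at `i` are `lam * β ^ (p - m)`. A site that is not a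
neighbour therefore has no influence. Flipping a neighbour `j` multiplies the odds by `β ^ 2`, and
odds `t` give the probability `t / (t + 1)`, which is `1`-Lipschitz in `t ≥ 0`; so the influence of
`j` is at most `lam * |β ^ 2 - 1| * β ^ (p - m - 1)`, where now `p` and `m` do not count `j`, that
is, `p + m = deg i - 1`. The exponent then lies between `-deg i` and `deg i - 2`.
-/

open Finset

noncomputable section
attribute [local instance] Classical.propDecidable

variable {V : Type*} [Fintype V] [DecidableEq V]

/-- Conditional probability that the spin at `i` is `+1`, given the configuration `σ`
at all other sites. -/
def condPlus (μ : (V → Bool) → ℝ) (i : V) (σ : V → Bool) : ℝ :=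
  μ (Function.update σ i true) /
    (μ (Function.update σ i true) + μ (Function.update σ i false))

/-- Total variation distance between the conditional laws of the spin at `i` given
`σ_j = +1` resp. `σ_j = −1`, the configuration elsewhere being `σ`. -/
def tvCond (μ : (V → Bool) → ℝ) (i j : V) (σ : V → Bool) : ℝ :=
  (|condPlus μ i (Function.update σ j true) -
      condPlus μ i (Function.update σ j false)| +
    |(1 - condPlus μ i (Function.update σ j true)) -
      (1 - condPlus μ i (Function.update σ j false))|) / 2

/-- Entry `R_{ij}` of the Dobrushin matrix: the worst-case influence of site `j`
on site `i`. -/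
def dobrushin [Nonempty V] (μ : (V → Bool) → ℝ) (i j : V) : ℝ :=
  univ.sup' univ_nonempty (fun σ : V → Bool => tvCond μ i j σ)

lemma abs_div_add_one_sub_div_add_one_le {K : Type*} [Field K] [LinearOrder K]
    [IsStrictOrderedRing K] {s t : K} (hs : 0 ≤ s) (ht : 0 ≤ t) :
    |s / (s + 1) - t / (t + 1)| ≤ |s - t| := by
  have hdiff : s / (s + 1) - t / (t + 1) = (s - t) / ((s + 1) * (t + 1)) := by
    field_simp
    ring
  have hden : 1 ≤ (s + 1) * (t + 1) :=
    one_le_mul_of_one_le_of_one_le (le_add_of_nonneg_left hs) (le_add_of_nonneg_left ht)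
  rw [hdiff, abs_div, abs_of_pos (zero_lt_one.trans_le hden)]
  exact div_le_self (abs_nonneg _) hden

lemma zpow_le_max_of_mem_Icc {K : Type*} [Field K] [LinearOrder K] [IsStrictOrderedRing K]
    {a : K} (ha : 0 < a) {k l n : ℤ} (hn : n ∈ Set.Icc k l) : a ^ n ≤ max (a ^ l) (a ^ k) := by
  rcases le_total 1 a with h | h
  · exact le_max_of_le_left (zpow_le_zpow_right₀ h hn.2)
  · exact le_max_of_le_right (zpow_le_zpow_right_of_le_one₀ ha h hn.1)

lemma pow_card_filter_eq_ite_mul {ι M : Type*} [DecidableEq ι] [CommMonoid M] {S : Finset ι}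
    {i : ι} (hi : i ∈ S) (p : ι → Prop) [DecidablePred p] (a : M) :
    a ^ #{v ∈ S | p v} = (if p i then a else 1) * a ^ #{v ∈ S.erase i | p v} := by
  simp only [← prod_const, prod_filter]
  exact (mul_prod_erase _ _ hi).symm

lemma prod_prod_eq_sq_mul_prod_prod_erase {ι M : Type*} [DecidableEq ι] [CommMonoid M]
    {S : Finset ι} {i : ι} (hi : i ∈ S) (f : ι → ι → M) (hone : f i i = 1)
    (hsymm : ∀ u ∈ S, f u i = f i u) :
    ∏ u ∈ S, ∏ w ∈ S, f u w =
      (∏ w ∈ S, f i w) ^ 2 * ∏ u ∈ S.erase i, ∏ w ∈ S.erase i, f u w := by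
  have hcolumn : ∏ u ∈ S.erase i, f u i = ∏ w ∈ S, f i w := by
    rw [prod_congr rfl fun u hu => hsymm u (mem_of_mem_erase hu), prod_erase _ hone]
  have hrow (u : ι) : ∏ w ∈ S, f u w = f u i * ∏ w ∈ S.erase i, f u w :=
    (mul_prod_erase _ _ hi).symm
  rw [← mul_prod_erase _ _ hi, prod_congr rfl fun u _ => hrow u, prod_mul_distrib, hcolumn,
    sq, mul_assoc]

/-- The number of neighbours of `i` that carry the spin `s` in `σ`: the number of monochromatic
edges at `i` once `i` is given the spin `s`. The spin `σ i` itself is irrelevant. -/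
def spinDegree (G : SimpleGraph V) (i : V) (s : Bool) (σ : V → Bool) : ℕ :=
  #{w | G.Adj i w ∧ σ w = s}

omit [DecidableEq V] in
lemma spinDegree_true_add_spinDegree_false (G : SimpleGraph V) (i : V)
    [Fintype (G.neighborSet i)] (σ : V → Bool) :
    spinDegree G i true σ + spinDegree G i false σ = G.degree i := by
  have hfilter (s : Bool) :
      spinDegree G i s σ = #{w ∈ G.neighborFinset i | σ w = s} := by
    refine congrArg card (Finset.ext fun w => ?_)
    simp
  rw [hfilter, hfilter, ← G.card_neighborFinset_eq_degree,
    ← card_filter_add_card_filter_not (s := G.neighborFinset i) (fun w => σ w = true)]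
  simp only [Bool.not_eq_true]

lemma spinDegree_update_of_not_adj {G : SimpleGraph V} {i j : V} (h : ¬ G.Adj i j) (s b : Bool)
    (σ : V → Bool) : spinDegree G i s (Function.update σ j b) = spinDegree G i s σ := by
  refine congrArg card (filter_congr fun w _ => and_congr_right fun hw => ?_)
  rw [Function.update_of_ne]
  rintro rfl
  exact h hw

lemma spinDegree_update_of_adj {G : SimpleGraph V} {i j : V} (h : G.Adj i j)
    {s t : Bool} (hts : t ≠ s) (σ : V → Bool) :
    spinDegree G i s (Function.update σ j s) =
      spinDegree G i s (Function.update σ j t) + 1 := by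
  have hj : j ∉ ({w | G.Adj i w ∧ Function.update σ j t w = s} : Finset V) := by simp [hts]
  rw [spinDegree, spinDegree, ← card_insert_of_notMem hj]
  congr 1
  ext w
  by_cases hw : w = j
  · simp [hw, h]
  · simp [hw]

lemma spinDegree_sub_mem_Icc {G : SimpleGraph V} {i j : V} [Fintype (G.neighborSet i)]
    (h : G.Adj i j) (σ : V → Bool) :
    (spinDegree G i true (Function.update σ j false) : ℤ) -
        spinDegree G i false (Function.update σ j true) - 1 ∈
      Set.Icc (-(G.degree i : ℤ)) (G.degree i - 2) := by
  have hdegree := spinDegree_true_add_spinDegree_false G i (Function.update σ j true)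
  have hplus := spinDegree_update_of_adj h Bool.false_ne_true σ
  constructor <;> omega

/-- The Ising weight of the subgraph of `G` induced on `S`, at the restriction of `σ` to `S`, with
edges counted as in `isingWeight`. For `S = univ.erase i` it is the part of the weight of `σ` that
does not involve `i`. -/
def isingWeightOn (G : SimpleGraph V) (β lam : ℝ) (S : Finset V) (σ : V → Bool) : ℝ :=
  lam ^ #{v ∈ S | σ v = true} *
    ∏ u ∈ S, ∏ w ∈ S, (if G.Adj u w ∧ σ u = σ w then Real.sqrt β else 1)

section Weight

variable (G : SimpleGraph V) {β lam : ℝ}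

omit [Fintype V] [DecidableEq V] in
lemma isingWeightOn_pos (hβ : 0 < β) (hlam : 0 < lam) (S : Finset V) (σ : V → Bool) :
    0 < isingWeightOn G β lam S σ := by
  refine mul_pos (pow_pos hlam _) (prod_pos fun u _ => prod_pos fun w _ => ?_)
  split_ifs <;> positivity

omit [DecidableEq V] in
lemma isingWeight_pos (hβ : 0 < β) (hlam : 0 < lam) (σ : V → Bool) :
    0 < isingWeight G β lam σ :=
  isingWeightOn_pos G hβ hlam univ σ

omit [Fintype V] [DecidableEq V] in
lemma isingWeightOn_congr {S : Finset V} {σ τ : V → Bool} (h : ∀ v ∈ S, σ v = τ v) :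
    isingWeightOn G β lam S σ = isingWeightOn G β lam S τ := by
  rw [isingWeightOn, isingWeightOn, filter_congr fun v hv => by rw [h v hv]]
  congr 1
  refine prod_congr rfl fun u hu => prod_congr rfl fun w hw => ?_
  rw [h u hu, h w hw]

omit [DecidableEq V] in
lemma sq_prod_sqrt_eq_pow_spinDegree (hβ : 0 ≤ β) (i : V) (σ : V → Bool) :
    (∏ w, if G.Adj i w ∧ σ i = σ w then Real.sqrt β else 1) ^ 2 =
      β ^ spinDegree G i (σ i) σ := by
  simp only [← prod_filter, prod_const, pow_right_comm, Real.sq_sqrt hβ, spinDegree,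
    eq_comm (a := σ i)]

lemma isingWeight_eq_mul_isingWeightOn_erase (hβ : 0 ≤ β) (i : V) (σ : V → Bool) :
    isingWeight G β lam σ =
      (if σ i = true then lam else 1) * β ^ spinDegree G i (σ i) σ *
        isingWeightOn G β lam (univ.erase i) σ := by
  rw [isingWeight, isingWeightOn, pow_card_filter_eq_ite_mul (mem_univ i),
    prod_prod_eq_sq_mul_prod_prod_erase (mem_univ i) _ (by simp)
      fun u _ => by simp only [G.adj_comm, eq_comm],
    sq_prod_sqrt_eq_pow_spinDegree G hβ]
  ring

lemma isingWeight_update (hβ : 0 ≤ β) (i : V) (s : Bool) (σ : V → Bool) :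
    isingWeight G β lam (Function.update σ i s) =
      (if s = true then lam else 1) * β ^ spinDegree G i s σ *
        isingWeightOn G β lam (univ.erase i) σ := by
  rw [isingWeight_eq_mul_isingWeightOn_erase G hβ i, Function.update_self,
    spinDegree_update_of_not_adj G.irrefl,
    isingWeightOn_congr G fun v hv => Function.update_of_ne (ne_of_mem_erase hv) s σ]

end Weight

omit [Fintype V] in
lemma condPlus_div_const (μ : (V → Bool) → ℝ) {Z : ℝ} (hZ : Z ≠ 0) (i : V) (σ : V → Bool) :
    condPlus (fun τ => μ τ / Z) i σ = condPlus μ i σ := by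
  simp only [condPlus, ← add_div, div_div_div_cancel_right₀ hZ]

omit [Fintype V] in
lemma tvCond_eq_abs_condPlus_sub (μ : (V → Bool) → ℝ) (i j : V) (σ : V → Bool) :
    tvCond μ i j σ = |condPlus μ i (Function.update σ j true) -
      condPlus μ i (Function.update σ j false)| := by
  rw [tvCond, sub_sub_sub_cancel_left, abs_sub_comm (condPlus μ i (Function.update σ j false)),
    add_self_div_two]

section Influence

variable (G : SimpleGraph V) {β lam : ℝ}

lemma condPlus_isingModel (hβ : 0 < β) (hlam : 0 < lam) (i : V) (σ : V → Bool) :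
    condPlus (isingModel G β lam) i σ =
      lam * β ^ ((spinDegree G i true σ : ℤ) - spinDegree G i false σ) /
        (lam * β ^ ((spinDegree G i true σ : ℤ) - spinDegree G i false σ) + 1) := by
  have hpartition : ∑ τ, isingWeight G β lam τ ≠ 0 :=
    (sum_pos (fun τ _ => isingWeight_pos G hβ hlam τ) univ_nonempty).ne'
  have hrest := (isingWeightOn_pos G hβ hlam (univ.erase i) σ).ne'
  calc condPlus (isingModel G β lam) i σ
      = condPlus (isingWeight G β lam) i σ := condPlus_div_const _ hpartition i σ
    _ = lam * β ^ spinDegree G i true σ /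
          (lam * β ^ spinDegree G i true σ + β ^ spinDegree G i false σ) := by
      simp only [condPlus, isingWeight_update G hβ.le, ← add_mul, mul_div_mul_right _ _ hrest,
        if_true, reduceCtorEq, if_false, one_mul]
    _ = _ := by
      rw [zpow_sub₀ hβ.ne', zpow_natCast, zpow_natCast]
      field_simp

variable {G} {i j : V}

lemma tvCond_isingModel_of_not_adj (hβ : 0 < β) (hlam : 0 < lam) (h : ¬ G.Adj i j)
    (σ : V → Bool) : tvCond (isingModel G β lam) i j σ = 0 := by
  simp only [tvCond_eq_abs_condPlus_sub, condPlus_isingModel G hβ hlam,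
    spinDegree_update_of_not_adj h, sub_self, abs_zero]

lemma tvCond_isingModel_le_of_adj (hβ : 0 < β) (hlam : 0 < lam) (h : G.Adj i j)
    (σ : V → Bool) :
    tvCond (isingModel G β lam) i j σ ≤
      lam * |β ^ 2 - 1| * β ^ ((spinDegree G i true (Function.update σ j false) : ℤ) -
        spinDegree G i false (Function.update σ j true) - 1) := by
  have hplus := spinDegree_update_of_adj h Bool.false_ne_true σ
  have hminus := spinDegree_update_of_adj h Bool.false_ne_true.symm σ
  rw [tvCond_eq_abs_condPlus_sub, condPlus_isingModel G hβ hlam, condPlus_isingModel G hβ hlam,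
    hplus, hminus]
  set p := spinDegree G i true (Function.update σ j false)
  set m := spinDegree G i false (Function.update σ j true)
  have hodds_plus : β ^ (((p + 1 : ℕ) : ℤ) - m) = β ^ 2 * β ^ ((p : ℤ) - m - 1) := by
    rw [← zpow_natCast β 2, ← zpow_add₀ hβ.ne']
    congr 1
    push_cast
    ring
  have hodds_minus : (p : ℤ) - (m + 1 : ℕ) = p - m - 1 := by
    push_cast
    ring
  rw [hodds_plus, hodds_minus]
  set x := β ^ ((p : ℤ) - m - 1)
  have hx : 0 < x := zpow_pos hβ _
  calc |lam * (β ^ 2 * x) / (lam * (β ^ 2 * x) + 1) - lam * x / (lam * x + 1)|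
      ≤ |lam * (β ^ 2 * x) - lam * x| :=
        abs_div_add_one_sub_div_add_one_le (by positivity) (by positivity)
    _ = |lam * (β ^ 2 - 1) * x| := by ring_nf
    _ = lam * |β ^ 2 - 1| * x := by
      rw [abs_mul, abs_mul, abs_of_pos hlam, abs_of_pos hx]

end Influence

theorem ising_dobrushin_entries_general [Nonempty V]
    (G : SimpleGraph V) [DecidableRel G.Adj]
    (β lam : ℝ) (hβ : 0 < β) (hlam : 0 < lam) (i j : V) :
    (¬ G.Adj i j → dobrushin (isingModel G β lam) i j = 0) ∧
    (G.Adj i j →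
      dobrushin (isingModel G β lam) i j ≤
        lam * |β ^ 2 - 1| *
          max (β ^ ((G.degree i : ℤ) - 2)) (β ^ (-(G.degree i : ℤ)))) := by
  constructor
  · intro h
    exact sup'_eq_of_forall _ _ fun σ _ => tvCond_isingModel_of_not_adj hβ hlam h σ
  · intro h
    refine sup'_le _ _ fun σ _ => (tvCond_isingModel_le_of_adj hβ hlam h σ).trans ?_
    gcongr
    exact zpow_le_max_of_mem_Icc hβ (spinDegree_sub_mem_Icc h σ)

/-- Bounds on the entries of the Dobrushin matrix of the Ising
model with edge activity `β > 0` and external field `0 < λ ≤ 1`. -/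
theorem ising_dobrushin_entries [Nonempty V]
    (G : SimpleGraph V) [DecidableRel G.Adj]
    (β lam : ℝ) (hβ : 0 < β) (hlam₀ : 0 < lam) (hlam₁ : lam ≤ 1)
    (i j : V) (hij : i ≠ j) :
    (¬ G.Adj i j → dobrushin (isingModel G β lam) i j = 0) ∧
    (G.Adj i j →
      dobrushin (isingModel G β lam) i j ≤
        lam * |β ^ 2 - 1| *
          max (β ^ ((G.degree i : ℤ) - 2)) (β ^ (-(G.degree i : ℤ)))) :=
  ising_dobrushin_entries_general G β lam hβ hlam₀ i j
end
end

section
/- For all real numbers a, b, x, η > 0, (1/(x+1))·a·log a + (x/(x+1))·b·log b − ((a+xb)/(x+1))·log((a+xb)/(x+1)) ≤ max(η, η⁻¹) · [ (1/(ηx+1))·a·log a + (ηx/(ηx+1))·b·log b − ((a+ηxb)/(ηx+1))·log((a+ηxb)/(ηx+1)) ]. -/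
/-!
The inequality is a single application of Jensen's inequality. If `v * p ≤ q` for probability
weights `p`, `q` and `v ≥ 0`, then the `q`-mean of `f` is also the mean of `f` under the
nonnegative weights `q - v * p` together with the `p`-mean of `f` taken with weight `v`.
Convexity of `Φ` along this decomposition bounds `v` times the Jensen gap of `p` by that of `q`.
For `Φ t = t log t` the Jensen gap is the entropy, and the density of `Bernoulli(1/(x+1))` with
respect to `Bernoulli(1/(ηx+1))` is at most `max η η⁻¹`.
-/

section JensenGap

variable {𝕜 E β ι : Type*} [AddCommGroup E] [AddCommGroup β]

/-- The Jensen gap `𝔼 Φ(f) - Φ(𝔼 f)` of `f` under the weights `w` on `t`, also known as the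
`Φ`-entropy of `f`. For `Φ t = t log t` it is the entropy functional. Normalization
of the weights is not part of the definition. -/
def jensenGap [SMul 𝕜 E] [SMul 𝕜 β] (Φ : E → β) (t : Finset ι) (w : ι → 𝕜) (f : ι → E) : β :=
  ∑ i ∈ t, w i • Φ (f i) - Φ (∑ i ∈ t, w i • f i)

lemma smul_sum_smul_add_sum_sub_mul_smul [Ring 𝕜] [Module 𝕜 E] (t : Finset ι) (v : 𝕜)
    (p q : ι → 𝕜) (g : ι → E) :
    v • ∑ i ∈ t, p i • g i + ∑ i ∈ t, (q i - v * p i) • g i = ∑ i ∈ t, q i • g i := by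
  simp only [sub_smul, mul_smul, Finset.sum_sub_distrib, ← Finset.smul_sum, add_sub_cancel]

variable [Field 𝕜] [LinearOrder 𝕜] [IsStrictOrderedRing 𝕜] [PartialOrder β] [IsOrderedAddMonoid β]
  [Module 𝕜 E] [Module 𝕜 β] [IsStrictOrderedModule 𝕜 β]
  {s : Set E} {Φ : E → β} {t : Finset ι} {p q : ι → 𝕜} {f : ι → E}

lemma smul_jensenGap_le_jensenGap {v : 𝕜} (hΦ : ConvexOn 𝕜 s Φ) (hf : ∀ i ∈ t, f i ∈ s)
    (hp : ∀ i ∈ t, 0 ≤ p i) (hp_sum : ∑ i ∈ t, p i = 1) (hq_sum : ∑ i ∈ t, q i = 1)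
    (hv : 0 ≤ v) (hpq : ∀ i ∈ t, v * p i ≤ q i) :
    v • jensenGap Φ t p f ≤ jensenGap Φ t q f := by
  have total_weight : v + ∑ i ∈ t, (q i - v * p i) = 1 := by
    rw [Finset.sum_sub_distrib, ← Finset.mul_sum, hp_sum, hq_sum, mul_one, add_sub_cancel]
  have mean_mem : ∑ i ∈ t, p i • f i ∈ s := hΦ.1.sum_mem hp hp_sum hf
  have jensen := hΦ.map_add_sum_le (fun i hi ↦ sub_nonneg.2 (hpq i hi)) total_weight hf hv mean_mem
  rw [smul_sum_smul_add_sum_sub_mul_smul] at jensen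
  calc v • jensenGap Φ t p f
      = v • ∑ i ∈ t, p i • Φ (f i) - v • Φ (∑ i ∈ t, p i • f i) := smul_sub ..
    _ = ∑ i ∈ t, q i • Φ (f i)
          - (v • Φ (∑ i ∈ t, p i • f i) + ∑ i ∈ t, (q i - v * p i) • Φ (f i)) := by
        rw [← smul_sum_smul_add_sum_sub_mul_smul t v p q]; abel
    _ ≤ jensenGap Φ t q f := sub_le_sub_left jensen _

lemma jensenGap_le_smul_jensenGap {M : 𝕜} (hΦ : ConvexOn 𝕜 s Φ) (hf : ∀ i ∈ t, f i ∈ s)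
    (hp : ∀ i ∈ t, 0 ≤ p i) (hp_sum : ∑ i ∈ t, p i = 1) (hq_sum : ∑ i ∈ t, q i = 1)
    (hpq : ∀ i ∈ t, p i ≤ M * q i) :
    jensenGap Φ t p f ≤ M • jensenGap Φ t q f := by
  have one_le_M : 1 ≤ M := by
    simpa only [← Finset.mul_sum, hp_sum, hq_sum, mul_one] using Finset.sum_le_sum hpq
  have hM : 0 < M := one_pos.trans_le one_le_M
  exact (inv_smul_le_iff_of_pos hM).1 <| smul_jensenGap_le_jensenGap hΦ hf hp hp_sum hq_sum
    (inv_nonneg.2 hM.le) fun i hi ↦ (inv_mul_le_iff₀ hM).2 (hpq i hi)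

end JensenGap

section TwoPoint

variable {𝕜 : Type*} [Field 𝕜] {x η : 𝕜}

/-- The probability weights on two points with odds `1 : x`, that is, `Bernoulli(1/(x+1))`
with the mass `1/(x+1)` at `0`. -/
def oddsWeights (x : 𝕜) : Fin 2 → 𝕜 := ![1 / (x + 1), x / (x + 1)]

lemma sum_oddsWeights (hx : x + 1 ≠ 0) : ∑ i, oddsWeights x i = 1 := by
  simp only [Fin.sum_univ_two, oddsWeights, Matrix.cons_val_zero, Matrix.cons_val_one]
  rw [← add_div, add_comm, div_self hx]

variable [LinearOrder 𝕜] [IsStrictOrderedRing 𝕜]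

lemma oddsWeights_nonneg (hx : 0 ≤ x) : ∀ i, 0 ≤ oddsWeights x i :=
  have : 0 ≤ x + 1 := by positivity
  Fin.forall_fin_two.2 ⟨one_div_nonneg.2 this, div_nonneg hx this⟩

lemma one_le_max_self_inv (hη : 0 < η) : 1 ≤ max η η⁻¹ :=
  le_max_iff.2 <| (le_total 1 η).imp_right fun h ↦ (one_le_inv₀ hη).2 h

lemma oddsWeights_le_max_mul (hx : 0 ≤ x) (hη : 0 < η) (i : Fin 2) :
    oddsWeights x i ≤ max η η⁻¹ * oddsWeights (η * x) i := by
  have hM : 1 ≤ max η η⁻¹ := one_le_max_self_inv hη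
  fin_cases i
  · have normalizer_le : η * x + 1 ≤ max η η⁻¹ * (x + 1) := by
      rw [mul_add_one]
      gcongr
      exact le_max_left ..
    change 1 / (x + 1) ≤ max η η⁻¹ * (1 / (η * x + 1))
    rwa [mul_one_div, div_le_div_iff₀ (by positivity) (by positivity), one_mul]
  · have hMη : 1 ≤ max η η⁻¹ * η := (inv_le_iff_one_le_mul₀ hη).1 (le_max_right ..)
    have normalizer_le : η * x + 1 ≤ max η η⁻¹ * η * (x + 1) := by
      rw [mul_add_one]
      gcongr
      exact le_mul_of_one_le_left hη.le hM
    change x / (x + 1) ≤ max η η⁻¹ * (η * x / (η * x + 1))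
    rw [← mul_div_assoc, div_le_div_iff₀ (by positivity) (by positivity)]
    calc x * (η * x + 1) ≤ x * (max η η⁻¹ * η * (x + 1)) := by gcongr
      _ = max η η⁻¹ * (η * x) * (x + 1) := by ring

variable {E β : Type*} [AddCommGroup E] [Module 𝕜 E] [AddCommGroup β] [PartialOrder β]
  [IsOrderedAddMonoid β] [Module 𝕜 β] [IsStrictOrderedModule 𝕜 β]

theorem two_point_entropy_comparison_general {s : Set E} {Φ : E → β} (hΦ : ConvexOn 𝕜 s Φ)
    {f : Fin 2 → E} (hf : ∀ i, f i ∈ s) (hx : 0 ≤ x) (hη : 0 < η) :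
    jensenGap Φ Finset.univ (oddsWeights x) f ≤
      max η η⁻¹ • jensenGap Φ Finset.univ (oddsWeights (η * x)) f :=
  jensenGap_le_smul_jensenGap hΦ (fun i _ ↦ hf i) (fun i _ ↦ oddsWeights_nonneg hx i)
    (sum_oddsWeights (by positivity)) (sum_oddsWeights (by positivity))
    fun i _ ↦ oddsWeights_le_max_mul hx hη i

end TwoPoint

lemma jensenGap_mul_log_oddsWeights (a b x : ℝ) :
    jensenGap (fun t ↦ t * Real.log t) Finset.univ (oddsWeights x) ![a, b] =
      (1 / (x + 1)) * (a * Real.log a) + (x / (x + 1)) * (b * Real.log b) -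
        ((a + x * b) / (x + 1)) * Real.log ((a + x * b) / (x + 1)) := by
  have mean_eq : 1 / (x + 1) * a + x / (x + 1) * b = (a + x * b) / (x + 1) := by ring
  simp only [jensenGap, oddsWeights, Fin.sum_univ_two, Matrix.cons_val_zero, Matrix.cons_val_one,
    smul_eq_mul, mean_eq]

/-- Comparison of two-point entropies: for all positive `a, b, x, η`,
the entropy of the pair `(a,b)` under `Bernoulli(1/(x+1))` is at most
`max(η, η⁻¹)` times the entropy under `Bernoulli(1/(ηx+1))`. -/
theorem two_point_entropy_comparison (a b x η : ℝ)
    (ha : 0 < a) (hb : 0 < b) (hx : 0 < x) (hη : 0 < η) :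
    (1 / (x + 1)) * (a * Real.log a) + (x / (x + 1)) * (b * Real.log b) -
        ((a + x * b) / (x + 1)) * Real.log ((a + x * b) / (x + 1)) ≤
      max η η⁻¹ *
        ((1 / (η * x + 1)) * (a * Real.log a) +
          (η * x / (η * x + 1)) * (b * Real.log b) -
          ((a + η * x * b) / (η * x + 1)) *
            Real.log ((a + η * x * b) / (η * x + 1))) := by
  simpa only [jensenGap_mul_log_oddsWeights, smul_eq_mul] using
    two_point_entropy_comparison_general Real.convexOn_mul_log (f := ![a, b])
      (Fin.forall_fin_two.2 ⟨ha.le, hb.le⟩) hx.le hη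
end
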